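/- arXiv:1701.00269 — 2 statements merged into one kernel-verified Lean document; each statement's English description precedes it below -/
import Mathlib

section
/- For every even integer k ≥ 4 there exists a constant C = C(k) > 0 such that for all integers n ≥ 2 and s ≥ 1, the number f_3(n,k,s) of edge-colored complete bipartite graphs K_{s,s} with vertex set contained in [n] whose extension is C_k-free is at most 2^{C·(s·log n + s²)}. -/
/-!
Write `k = 2ℓ` and `h = ℓ - 1`, and consider a coloured `K_{s,s}` with no loose `k`-cycle in its
extension. The count rests on two facts about its colouring.

**There are only `O(s)` colours** (`card_colourSet_le`, `card_colours_le`). Delete vertices one at a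
time as long as the deletion destroys only boundedly many colours outside the vertex set. If the
process stops at a nonempty graph, every vertex has many colours outside the vertex set all of whose
edges pass through it, so any tree of bounded size embeds greedily with new vertices and new
colours, each colour being private to the parent end of its edge (`exists_treeEmb`). The tree used
is a double broom: two adjacent hubs with `2h+1` spokes of length `h` each, every spoke ending in
`2h+1` leaves. Leaves of opposite sides are joined by a tree path of `2h+1` edges, hence are
adjacent, and this edge closes a loose cycle unless its colour is a vertex of that path. There are
more pairs of spokes than possible positions for such a colour, so two closing edges share a colour
sitting at the same position of the same spoke; routing the cycle through that vertex instead of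
through this spoke gives a loose `k`-cycle (`cycle_of_broom`).

**Repetitions of colours are sparse** (`sparseRepeats_of_no_cycle`). Let `H` be a set of edges in
which each colour has degree at most `s / j` at each vertex. The power mean inequality gives many
homomorphisms `K_{ℓ,ℓ} → H`, and each way for a homomorphism to have a repeated vertex, a repeated
colour, or a vertex as a colour happens for at most a `1 / j` fraction of all maps. A homomorphism
without these defects carries a loose `2ℓ`-cycle, so `j |H| ^ L ≤ Q s ^ (2L)` with `L = ℓ²`.

**Counting** (`card_sparseRepeats_le`). Give an edge level `t` if `2 ^ (L t)` is the first threshold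
`J` at which its colour has degree more than `s / J` at one of its ends. By sparseness the number of
edges of level more than `t` is `O(s² / 2 ^ t)`, so the levels sum to `O(s²)` and there are
`2 ^ O(s²)` level functions. At each vertex at most `J` colours have degree more than `s / J`;
listing them at all vertices costs `2 ^ O(s²)` as long as `J` stays below a small power of `s`.
Given the lists, an edge of level `t` has at most `2 ^ (1 + L t)` possible colours, which multiplies
to `2 ^ O(s²)`. The remaining factor `n ^ O(s)` pays for naming the vertices and the `O(s)` colours.
-/

/-- A hypergraph `H` contains a loose `k`-cycle. -/
def HasLooseCycle (k : ℕ) (H : Finset (Finset ℕ)) : Prop :=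
  ∃ (e : ZMod k → Finset ℕ) (v : ZMod k → ℕ),
    Function.Injective e ∧ Function.Injective v ∧
    (∀ i, e i ∈ H) ∧
    (∀ i, e i ∩ e (i + 1) = ({v i} : Finset ℕ)) ∧
    (∀ i j, j ≠ i → j ≠ i + 1 → i ≠ j + 1 → e i ∩ e j = ∅)

/-- The edge set of the complete bipartite graph with parts `A` and `B`
(edges as 2-element subsets of `ℕ`). -/
def completeBipartiteEdges (A B : Finset ℕ) : Finset (Finset ℕ) :=
  (A ×ˢ B).image fun p => ({p.1, p.2} : Finset ℕ)

/-- The extension of an edge-colored graph: each edge `e` becomes `e ∪ {χ e}`. -/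
def Extension (G : Finset (Finset ℕ)) (χ : Finset ℕ → ℕ) : Finset (Finset ℕ) :=
  G.image fun e => insert (χ e) e

/-! ### Loose cycles in extensions -/

/-- Adjacency in the complete bipartite graph with parts `A` and `B`. -/
def BAdj (A B : Finset ℕ) (x y : ℕ) : Prop := (x ∈ A ∧ y ∈ B) ∨ (x ∈ B ∧ y ∈ A)

lemma BAdj.symm {A B : Finset ℕ} {x y : ℕ} (h : BAdj A B x y) : BAdj A B y x := by
  unfold BAdj at *; tauto

lemma BAdj.mem_right {A B : Finset ℕ} {x y : ℕ} (h : BAdj A B x y) : y ∈ A ∪ B := by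
  unfold BAdj at h; simp only [Finset.mem_union]; tauto

lemma BAdj.three {A B : Finset ℕ} (hAB : Disjoint A B) {x y z w : ℕ} (h1 : BAdj A B x y)
    (h2 : BAdj A B y z) (h3 : BAdj A B z w) : BAdj A B x w := by
  have hd : ∀ t, t ∈ A → t ∉ B := fun t h => Finset.disjoint_left.1 hAB h
  have := hd y; have := hd z
  unfold BAdj at *; tauto

lemma BAdj.chain {A B : Finset ℕ} (hAB : Disjoint A B) (p : ℕ → ℕ) (h : ℕ)
    (hp : ∀ t < 2 * h + 1, BAdj A B (p t) (p (t + 1))) : BAdj A B (p 0) (p (2 * h + 1)) := by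
  induction h with
  | zero => exact hp 0 (by omega)
  | succ h ih =>
    exact BAdj.three hAB (ih fun t ht => hp t (by omega)) (hp _ (by omega)) (hp _ (by omega))

lemma mem_completeBipartiteEdges {A B : Finset ℕ} {x y : ℕ} (h : BAdj A B x y) :
    ({x, y} : Finset ℕ) ∈ completeBipartiteEdges A B := by
  unfold completeBipartiteEdges
  rw [Finset.mem_image]
  rcases h with h | h
  · exact ⟨(x, y), Finset.mem_product.2 h, rfl⟩
  · exact ⟨(y, x), Finset.mem_product.2 ⟨h.2, h.1⟩, Finset.pair_comm _ _⟩

lemma triple_mem_extension {A B : Finset ℕ} {χ : Finset ℕ → ℕ} {x y : ℕ} (h : BAdj A B x y)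
    {T : Finset ℕ} (hT : T = {x, y, χ {x, y}}) :
    T ∈ Extension (completeBipartiteEdges A B) χ := by
  unfold Extension
  rw [Finset.mem_image]
  refine ⟨{x, y}, mem_completeBipartiteEdges h, ?_⟩
  subst hT
  ext t; simp only [Finset.mem_insert, Finset.mem_singleton]; tauto

/-- A cyclic sequence `p 0, …, p (k-1)` of connecting vertices, together with the third vertices
`w i` of the triples, all `2k` vertices being distinct, spans a loose cycle. -/
lemma hasLooseCycle_of_seq {k : ℕ} (hk : 3 ≤ k) {E : Finset (Finset ℕ)} (p w : ℕ → ℕ)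
    (hp : ∀ i < k, ∀ j < k, p i = p j → i = j) (hw : ∀ i < k, ∀ j < k, w i = w j → i = j)
    (hpw : ∀ i < k, ∀ j < k, p i ≠ w j)
    (hE : ∀ i, i + 1 < k → ({p i, p (i + 1), w i} : Finset ℕ) ∈ E)
    (hlast : ({p (k - 1), p 0, w (k - 1)} : Finset ℕ) ∈ E) : HasLooseCycle k E := by
  have : NeZero k := ⟨by omega⟩
  have : Fact (1 < k) := ⟨by omega⟩
  have hv : ∀ i : ZMod k, i.val < k := fun i => ZMod.val_lt i
  have hinj : ∀ i j : ZMod k, i.val = j.val → i = j := fun i j h => ZMod.val_injective k h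
  have hP : ∀ i j : ZMod k, p i.val = p j.val ↔ i = j :=
    fun i j => ⟨fun h => hinj _ _ (hp _ (hv i) _ (hv j) h), fun h => by rw [h]⟩
  have hW : ∀ i j : ZMod k, w i.val = w j.val ↔ i = j :=
    fun i j => ⟨fun h => hinj _ _ (hw _ (hv i) _ (hv j) h), fun h => by rw [h]⟩
  have hPW : ∀ i j : ZMod k, p i.val ≠ w j.val := fun i j => hpw _ (hv i) _ (hv j)
  have hWP : ∀ i j : ZMod k, w j.val ≠ p i.val := fun i j => (hPW i j).symm
  have h01 : (1 : ZMod k) ≠ 0 := one_ne_zero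
  have h02 : (1 : ZMod k) + 1 ≠ 0 := by
    intro h
    have h2 : ((2 : ℕ) : ZMod k) = 0 := by push_cast; rw [← h]; norm_num
    rw [ZMod.natCast_eq_zero_iff] at h2
    have := Nat.le_of_dvd (by norm_num) h2
    omega
  refine ⟨fun i => {p i.val, p (i + 1).val, w i.val}, fun i => p (i + 1).val, ?_, ?_, ?_, ?_, ?_⟩
  · intro i j hij
    have : w i.val ∈ ({p j.val, p (j + 1).val, w j.val} : Finset ℕ) := by
      simp only at hij
      rw [← hij]; simp
    simpa [hWP, hW] using this
  · intro i j hij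
    simpa [hP] using hij
  · intro i
    have hval : (i + 1).val = (i.val + 1) % k := by
      rw [ZMod.val_add, ZMod.val_one]
    by_cases hi : i.val + 1 < k
    · simp only [hval, Nat.mod_eq_of_lt hi]
      exact hE _ hi
    · have h1 : i.val = k - 1 := by have := hv i; omega
      have h2 : (i + 1).val = 0 := by
        rw [hval, h1, Nat.sub_add_cancel (by omega), Nat.mod_self]
      simp only [h2, h1]
      exact hlast
  · intro i
    ext t
    simp only [Finset.mem_inter, Finset.mem_insert, Finset.mem_singleton]
    constructor
    · rintro ⟨h1, h2⟩
      rcases h1 with rfl | rfl | rfl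
      · rcases h2 with h | h | h
        · exact h
        · rw [hP, add_assoc, left_eq_add] at h; exact absurd h h02
        · exact absurd h (hPW _ _)
      · rfl
      · rcases h2 with h | h | h
        · exact absurd h (hWP _ _)
        · exact absurd h (hWP _ _)
        · rw [hW, left_eq_add] at h; exact absurd h h01
    · rintro rfl; simp
  · intro i j hji hj1 hi1
    ext t
    simp only [Finset.mem_inter, Finset.mem_insert, Finset.mem_singleton, Finset.notMem_empty,
      iff_false, not_and]
    have hij : i ≠ j := hji.symm
    rintro (rfl | rfl | rfl)
    · simp [hP, hPW, hij, hi1]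
    · simp [hP, hPW, hij, hj1.symm]
    · simp [hWP, hW, hij]

/-! ### Greedy embedding of trees with private colours -/

/-- Every edge of colour `c` in the complete bipartite graph on `A`, `B` is incident with `v`. -/
def PrivateAt (A B : Finset ℕ) (χ : Finset ℕ → ℕ) (v c : ℕ) : Prop :=
  ∀ x y, BAdj A B x y → χ {x, y} = c → x = v ∨ y = v

/-- The colours outside `V` that occur on the complete bipartite graph on `A`, `B`. -/
def colourSet (A B : Finset ℕ) (χ : Finset ℕ → ℕ) (V : Finset ℕ) : Finset ℕ :=
  (completeBipartiteEdges A B).image χ \ V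

lemma mem_colourSet {A B : Finset ℕ} {χ : Finset ℕ → ℕ} {V : Finset ℕ} {c : ℕ} :
    c ∈ colourSet A B χ V ↔ (∃ x y, BAdj A B x y ∧ χ {x, y} = c) ∧ c ∉ V := by
  unfold colourSet
  rw [Finset.mem_sdiff, Finset.mem_image]
  refine and_congr_left fun _ => ⟨?_, ?_⟩
  · rintro ⟨e, he, rfl⟩
    unfold completeBipartiteEdges at he
    rw [Finset.mem_image] at he
    obtain ⟨⟨x, y⟩, hxy, rfl⟩ := he
    exact ⟨x, y, Or.inl (Finset.mem_product.1 hxy), rfl⟩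
  · rintro ⟨x, y, h, rfl⟩
    exact ⟨_, mem_completeBipartiteEdges h, rfl⟩

/-- The greedy property: from each vertex there is an edge with a private colour outside `V`
avoiding any given small set `F`, both with its endpoint and with its colour. -/
def Greedy (A B : Finset ℕ) (χ : Finset ℕ → ℕ) (V : Finset ℕ) (D : ℕ) : Prop :=
  ∀ v ∈ A ∪ B, ∀ F : Finset ℕ, 2 * F.card ≤ D → ∃ u, BAdj A B v u ∧ u ∉ F ∧ χ {v, u} ∉ F ∧
    χ {v, u} ∉ V ∧ PrivateAt A B χ v (χ {v, u})

/-- If deleting any vertex `v` destroys more than `D` colours outside `V`, the greedy property holds: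
the destroyed colours are private to `v`, and a set `F` blocks at most `2 |F|` of them. -/
lemma greedy_of_card {A B : Finset ℕ} {χ : Finset ℕ → ℕ} {V : Finset ℕ} {D : ℕ}
    (h : ∀ v ∈ A ∪ B,
      D < (colourSet A B χ V \ colourSet (A.erase v) (B.erase v) χ V).card) :
    Greedy A B χ V D := by
  intro v hv F hF
  by_contra! hcon
  have hsub : colourSet A B χ V \ colourSet (A.erase v) (B.erase v) χ V ⊆
      F ∪ F.image (fun u => χ {v, u}) := by
    intro c hc
    rw [Finset.mem_sdiff, mem_colourSet, mem_colourSet] at hc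
    obtain ⟨⟨⟨x, y, hxy, hc1⟩, hcV⟩, hc2⟩ := hc
    have hpriv : PrivateAt A B χ v c := by
      intro a b hab habc
      by_contra! hne
      refine hc2 ⟨⟨a, b, ?_, habc⟩, hcV⟩
      unfold BAdj at *
      simp only [Finset.mem_erase]
      tauto
    obtain ⟨u, hu, huc⟩ : ∃ u, BAdj A B v u ∧ χ {v, u} = c := by
      rcases hpriv x y hxy hc1 with rfl | rfl
      · exact ⟨y, hxy, hc1⟩
      · exact ⟨x, hxy.symm, by rw [Finset.pair_comm]; exact hc1⟩
    rw [Finset.mem_union, Finset.mem_image]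
    by_cases huF : u ∈ F
    · exact Or.inr ⟨u, huF, huc⟩
    · left
      by_contra hcF
      subst huc
      exact hcon u hu huF hcF hcV hpriv
  have h1 := Finset.card_le_card hsub
  have h2 := Finset.card_union_le F (F.image (fun u => χ {v, u}))
  have h3 : (F.image (fun u => χ {v, u})).card ≤ F.card := Finset.card_image_le
  have := h v hv
  omega

/-- An embedding of the tree on `S ⊆ ι` given by the parent map `par`: `f` places the nodes and
`g i` is the colour of the edge joining `i` to its parent; that colour is private to the parent. -/
structure TreeEmb {ι : Type} (par : ι → ι) (root : ι) (S : Finset ι) (A B : Finset ℕ)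
    (χ : Finset ℕ → ℕ) (V : Finset ℕ) (f g : ι → ℕ) : Prop where
  mem : ∀ i ∈ S, f i ∈ A ∪ B
  injf : ∀ i ∈ S, ∀ j ∈ S, f i = f j → i = j
  injg : ∀ i ∈ S, ∀ j ∈ S, i ≠ root → j ≠ root → g i = g j → i = j
  adj : ∀ i ∈ S, i ≠ root → BAdj A B (f (par i)) (f i)
  col : ∀ i ∈ S, i ≠ root → χ {f (par i), f i} = g i
  notMem : ∀ i ∈ S, i ≠ root → g i ∉ V
  priv : ∀ i ∈ S, i ≠ root → PrivateAt A B χ (f (par i)) (g i)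

/-- Under the greedy property a bounded tree embeds, its nodes being added in the order of the depth
function `dep`; each new edge must avoid the vertices and colours used so far. -/
lemma exists_treeEmb {ι : Type} [DecidableEq ι] (par : ι → ι) (dep : ι → ℕ) (root : ι)
    (hdep : ∀ i, i ≠ root → dep (par i) < dep i) (hroot : ∀ i, i ≠ root → dep root < dep i)
    {A B : Finset ℕ} {χ : Finset ℕ → ℕ} {V : Finset ℕ} {D : ℕ} (hG : Greedy A B χ V D)
    {r : ℕ} (hr : r ∈ A ∪ B) (S : Finset ι) (hcl : ∀ i ∈ S, i ≠ root → par i ∈ S)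
    (hS : 4 * S.card ≤ D) :
    ∃ f g : ι → ℕ, TreeEmb par root S A B χ V f g := by
  induction S using Finset.induction_on_max_value dep with
  | empty => exact ⟨fun _ => r, fun _ => r, by constructor <;> simp⟩
  | insert a s ha hmax ih =>
    rw [Finset.card_insert_of_notMem ha] at hS
    have hcl' : ∀ i ∈ s, i ≠ root → par i ∈ s := by
      intro i hi hir
      refine Finset.mem_of_mem_insert_of_ne (hcl i (Finset.mem_insert_of_mem hi) hir) ?_
      intro h
      have h1 := hdep i hir
      have h2 := hmax i hi
      rw [h] at h1
      omega
    by_cases har : a = root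
    · have hs : s = ∅ := by
        rw [Finset.eq_empty_iff_forall_notMem]
        intro i hi
        have hir : i ≠ root := by rintro rfl; exact ha (har ▸ hi)
        have h1 := hroot i hir
        have h2 := hmax i hi
        rw [har] at h2
        omega
      subst hs har
      refine ⟨fun _ => r, fun _ => r, ?_⟩
      constructor <;> simp [hr]
    · obtain ⟨f, g, hT⟩ := ih hcl' (by omega)
      have hpa : par a ∈ s := by
        refine Finset.mem_of_mem_insert_of_ne (hcl a (Finset.mem_insert_self _ _) har) ?_
        intro h
        have h1 := hdep a har
        rw [h] at h1
        omega
      obtain ⟨u, hu, huF, hcF, hcV, hpr⟩ := hG (f (par a)) (hT.mem _ hpa)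
        (s.image f ∪ s.image g) (by
          have h1 := Finset.card_union_le (s.image f) (s.image g)
          have h2 : (s.image f).card ≤ s.card := Finset.card_image_le
          have h3 : (s.image g).card ≤ s.card := Finset.card_image_le
          omega)
      simp only [Finset.mem_union, Finset.mem_image, not_or, not_exists, not_and] at huF hcF
      have hne : ∀ i ∈ s, i ≠ a := by rintro i hi rfl; exact ha hi
      refine ⟨Function.update f a u, Function.update g a (χ {f (par a), u}), ?_⟩
      constructor
      · intro i hi
        rcases Finset.mem_insert.1 hi with rfl | hi
        · simpa using hu.mem_right
        · rw [Function.update_of_ne (hne i hi)]; exact hT.mem i hi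
      · intro i hi j hj
        rcases Finset.mem_insert.1 hi with rfl | hi' <;>
          rcases Finset.mem_insert.1 hj with hj' | hj'
        · intro _; exact hj'.symm
        · rw [Function.update_of_ne (hne j hj'), Function.update_self]
          intro h; exact absurd h.symm (huF.1 j hj')
        · subst hj'
          rw [Function.update_of_ne (hne i hi'), Function.update_self]
          intro h; exact absurd h (huF.1 i hi')
        · rw [Function.update_of_ne (hne i hi'), Function.update_of_ne (hne j hj')]
          exact hT.injf i hi' j hj'
      · intro i hi j hj hir hjr
        rcases Finset.mem_insert.1 hi with rfl | hi' <;>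
          rcases Finset.mem_insert.1 hj with hj' | hj'
        · intro _; exact hj'.symm
        · rw [Function.update_of_ne (hne j hj'), Function.update_self]
          intro h; exact absurd h.symm (hcF.2 j hj')
        · subst hj'
          rw [Function.update_of_ne (hne i hi'), Function.update_self]
          intro h; exact absurd h (hcF.2 i hi')
        · rw [Function.update_of_ne (hne i hi'), Function.update_of_ne (hne j hj')]
          exact hT.injg i hi' j hj' hir hjr
      all_goals
        intro i hi hir
        rcases Finset.mem_insert.1 hi with rfl | hi
        · simp only [Function.update_of_ne (hne _ hpa), Function.update_self] <;> assumption
        · simp only [Function.update_of_ne (hne _ (hcl' i hi hir)), Function.update_of_ne (hne i hi)]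
          first
            | exact hT.adj i hi hir
            | exact hT.col i hi hir
            | exact hT.notMem i hi hir
            | exact hT.priv i hi hir

/-! ### Closing a tree path to a loose cycle -/

/-- A path `node 0, …, node M` in the tree that climbs towards the root up to time `h` and
descends afterwards. -/
structure TreePath {ι : Type} (par : ι → ι) (root : ι) (S : Finset ι) (node : ℕ → ι)
    (h M : ℕ) : Prop where
  le : h ≤ M
  mem : ∀ t ≤ M, node t ∈ S
  inj : ∀ t ≤ M, ∀ t' ≤ M, node t = node t' → t = t'
  up : ∀ t < h, node t ≠ root ∧ par (node t) = node (t + 1)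
  down : ∀ t, h ≤ t → t < M → node (t + 1) ≠ root ∧ par (node (t + 1)) = node t

section TreePath

variable {ι : Type} {par : ι → ι} {root : ι} {S : Finset ι} {A B : Finset ℕ}
  {χ : Finset ℕ → ℕ} {V : Finset ℕ} {f g : ι → ℕ} {node : ℕ → ι} {h M : ℕ}

/-- The lower endpoint of the `t`-th edge of a tree path; it indexes the colour of that edge. -/
def child (node : ℕ → ι) (h t : ℕ) : ι := if t < h then node t else node (t + 1)

lemma TreePath.child_spec (hP : TreePath par root S node h M) {t : ℕ} (ht : t < M) :
    child node h t ∈ S ∧ child node h t ≠ root := by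
  unfold child
  split_ifs with hth
  · exact ⟨hP.mem _ ht.le, (hP.up t hth).1⟩
  · exact ⟨hP.mem _ ht, (hP.down t (by omega) ht).1⟩

lemma TreePath.child_inj (hP : TreePath par root S node h M) {t t' : ℕ} (ht : t < M)
    (ht' : t' < M) (he : child node h t = child node h t') : t = t' := by
  unfold child at he
  split_ifs at he with h1 h2 h2
  · exact hP.inj _ ht.le _ ht'.le he
  · have := hP.inj _ ht.le _ ht' he; omega
  · have := hP.inj _ ht _ ht'.le he; omega
  · have := hP.inj _ ht _ ht' he; omega

lemma TreePath.edge (hP : TreePath par root S node h M) (hT : TreeEmb par root S A B χ V f g)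
    {t : ℕ} (ht : t < M) : BAdj A B (f (node t)) (f (node (t + 1))) ∧
      χ {f (node t), f (node (t + 1))} = g (child node h t) := by
  unfold child
  split_ifs with hth
  · obtain ⟨h1, h2⟩ := hP.up t hth
    have h3 := hT.adj _ (hP.mem _ ht.le) h1
    have h4 := hT.col _ (hP.mem _ ht.le) h1
    rw [h2] at h3 h4
    exact ⟨h3.symm, by rw [Finset.pair_comm]; exact h4⟩
  · obtain ⟨h1, h2⟩ := hP.down t (by omega) ht
    have h3 := hT.adj _ (hP.mem _ ht) h1
    have h4 := hT.col _ (hP.mem _ ht) h1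
    rw [h2] at h3 h4
    exact ⟨h3, h4⟩

lemma TreePath.edge_mem (hP : TreePath par root S node h M)
    (hT : TreeEmb par root S A B χ V f g) {t : ℕ} (ht : t < M) :
    ({f (node t), f (node (t + 1)), g (child node h t)} : Finset ℕ) ∈
      Extension (completeBipartiteEdges A B) χ := by
  obtain ⟨h1, h2⟩ := hP.edge hT ht
  exact triple_mem_extension h1 (by rw [h2])

/-- An edge joining the two ends of a tree path with its apex in the interior never has one of the
colours of the path, since each of these is private to an interior vertex. -/
lemma TreePath.closing_ne (hP : TreePath par root S node h M)
    (hT : TreeEmb par root S A B χ V f g) (h0 : 0 < h) (hM : h < M)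
    (hadj : BAdj A B (f (node M)) (f (node 0))) {t : ℕ} (ht : t < M) :
    χ {f (node M), f (node 0)} ≠ g (child node h t) := by
  intro hc
  obtain ⟨hS, hr⟩ := hP.child_spec ht
  obtain ⟨t', ht0, htM, ht'⟩ : ∃ t', 0 < t' ∧ t' < M ∧ par (child node h t) = node t' := by
    unfold child
    split_ifs with hth
    · exact ⟨t + 1, by omega, by omega, (hP.up t hth).2⟩
    · exact ⟨t, by omega, ht, (hP.down t (by omega) ht).2⟩
  have := hT.priv _ hS hr _ _ hadj hc
  rw [ht'] at this
  rcases this with h1 | h1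
  · have := hP.inj _ le_rfl _ htM.le (hT.injf _ (hP.mem _ le_rfl) _ (hP.mem _ htM.le) h1); omega
  · have := hP.inj _ (Nat.zero_le _) _ htM.le
      (hT.injf _ (hP.mem _ (Nat.zero_le _)) _ (hP.mem _ htM.le) h1)
    omega

lemma TreeEmb.f_ne_g (hT : TreeEmb par root S A B χ V f g) (hV : A ∪ B ⊆ V) {i j : ι}
    (hi : i ∈ S) (hj : j ∈ S) (hjr : j ≠ root) : f i ≠ g j := by
  intro h
  exact hT.notMem j hj hjr (h ▸ hV (hT.mem i hi))

/-- A tree path with `M` edges and its closing edge give a loose `(M+1)`-cycle, unless the colour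
of the closing edge is a vertex of the path. -/
lemma TreePath.cycle_one (hP : TreePath par root S node h M)
    (hT : TreeEmb par root S A B χ V f g) (hV : A ∪ B ⊆ V) (h0 : 0 < h) (hM : h < M)
    (hadj : BAdj A B (f (node M)) (f (node 0)))
    (hc : ∀ t ≤ M, χ {f (node M), f (node 0)} ≠ f (node t)) :
    HasLooseCycle (M + 1) (Extension (completeBipartiteEdges A B) χ) := by
  set c := χ {f (node M), f (node 0)} with hcdef
  refine hasLooseCycle_of_seq (by omega) (fun t => f (node t))
    (fun t => if t < M then g (child node h t) else c) ?_ ?_ ?_ ?_ ?_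
  · intro i hi j hj hij
    exact hP.inj _ (by omega) _ (by omega)
      (hT.injf _ (hP.mem _ (by omega)) _ (hP.mem _ (by omega)) hij)
  · intro i hi j hj hij
    split_ifs at hij with h1 h2 h2
    · exact hP.child_inj h1 h2 (hT.injg _ (hP.child_spec h1).1 _ (hP.child_spec h2).1
        (hP.child_spec h1).2 (hP.child_spec h2).2 hij)
    · exact absurd hij.symm (hP.closing_ne hT h0 hM hadj h1)
    · exact absurd hij (hP.closing_ne hT h0 hM hadj h2)
    · omega
  · intro i hi j hj
    split_ifs with h1
    · exact hT.f_ne_g hV (hP.mem _ (by omega)) (hP.child_spec h1).1 (hP.child_spec h1).2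
    · exact (hc i (by omega)).symm
  · intro i hi
    have hi' : i < M := by omega
    simp only [hi', if_true]
    exact hP.edge_mem hT hi'
  · simp only [Nat.add_sub_cancel, lt_irrefl, if_false]
    exact triple_mem_extension hadj rfl

/-- A tree path with `M` edges whose two ends are joined to a common vertex `m` by two edges
`{end, other}` of colour `m` gives a loose `(M+2)`-cycle: the triples `{end, other, m}` are used
as links between `end` and `m`. -/
lemma TreePath.cycle_two (hP : TreePath par root S node h M)
    (hT : TreeEmb par root S A B χ V f g) (hV : A ∪ B ⊆ V) (h1 : 1 ≤ M) {m w w' : ι}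
    (hm : m ∈ S) (hw : w ∈ S) (hw' : w' ∈ S) (hmw : m ≠ w) (hmw' : m ≠ w') (hww' : w ≠ w')
    (hmn : ∀ t ≤ M, node t ≠ m) (hwn : ∀ t ≤ M, node t ≠ w) (hwn' : ∀ t ≤ M, node t ≠ w')
    (hadj : BAdj A B (f (node M)) (f w)) (hadj' : BAdj A B (f (node 0)) (f w'))
    (hc : χ {f (node M), f w} = f m) (hc' : χ {f (node 0), f w'} = f m) :
    HasLooseCycle (M + 2) (Extension (completeBipartiteEdges A B) χ) := by
  have hF : ∀ {i j : ι}, i ∈ S → j ∈ S → i ≠ j → f i ≠ f j :=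
    fun hi hj hij he => hij (hT.injf _ hi _ hj he)
  refine hasLooseCycle_of_seq (by omega) (fun t => if t ≤ M then f (node t) else f m)
    (fun t => if t < M then g (child node h t) else if t = M then f w else f w') ?_ ?_ ?_ ?_ ?_
  · intro i hi j hj hij
    split_ifs at hij with h1 h2 h2
    · exact hP.inj _ h1 _ h2 (hT.injf _ (hP.mem _ h1) _ (hP.mem _ h2) hij)
    · exact absurd hij (hF (hP.mem _ h1) hm (hmn _ h1))
    · exact absurd hij.symm (hF (hP.mem _ h2) hm (hmn _ h2))
    · omega
  · have hgw : ∀ {t : ℕ} {x : ι}, t < M → x ∈ S → f x ≠ g (child node h t) :=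
      fun ht hx => hT.f_ne_g hV hx (hP.child_spec ht).1 (hP.child_spec ht).2
    intro i hi j hj hij
    split_ifs at hij with h1 h2 h3 h2 h3 h4 h4 h3
    · exact hP.child_inj h1 h2 (hT.injg _ (hP.child_spec h1).1 _ (hP.child_spec h2).1
        (hP.child_spec h1).2 (hP.child_spec h2).2 hij)
    all_goals first
      | omega
      | exact absurd hij (hgw (by assumption) (by assumption))
      | exact absurd hij.symm (hgw (by assumption) (by assumption))
      | exact absurd hij (hF hw hw' hww')
      | exact absurd hij.symm (hF hw hw' hww')
  · intro i hi j hj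
    split_ifs with h1 h2 h3 h2 h3
    · exact hT.f_ne_g hV (hP.mem _ (by omega)) (hP.child_spec h2).1 (hP.child_spec h2).2
    · exact hF (hP.mem _ h1) hw (hwn _ h1)
    · exact hF (hP.mem _ h1) hw' (hwn' _ h1)
    · exact hT.f_ne_g hV hm (hP.child_spec h2).1 (hP.child_spec h2).2
    · exact hF hm hw hmw
    · exact hF hm hw' hmw'
  · intro i hi
    rcases Nat.lt_or_ge i M with hi' | hi'
    · have h2 : i + 1 ≤ M := hi'
      simp only [hi', hi'.le, h2, if_true]
      exact hP.edge_mem hT hi'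
    · obtain rfl : i = M := by omega
      simp only [le_refl, if_true, lt_irrefl, if_false, show ¬ (i + 1 ≤ i) by omega]
      refine triple_mem_extension hadj ?_
      rw [hc]
      ext t; simp only [Finset.mem_insert, Finset.mem_singleton]; tauto
  · simp only [show M + 2 - 1 = M + 1 by omega, show ¬ (M + 1 ≤ M) by omega,
      show ¬ (M + 1 < M) by omega, show M + 1 ≠ M by omega, if_false, Nat.zero_le, if_true]
    refine triple_mem_extension hadj' ?_
    rw [hc']
    ext t; simp only [Finset.mem_insert, Finset.mem_singleton]; tauto

end TreePath

/-! ### The double broom -/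

/-- The parent map of the double broom: two adjacent hubs `(false,0,0,0)` (the root) and
`(true,0,0,0)`, spokes `(σ, i, t, 0)` at hub `σ`, where `t` is the distance to the hub, and leaves
`(σ, i, h, l)` at the end of spoke `i`. Coordinates not of this form are harmless extra nodes. -/
def broomPar (x : Bool × ℕ × ℕ × ℕ) : Bool × ℕ × ℕ × ℕ :=
  if x.2.2.1 = 0 then (false, 0, 0, 0) else if x.2.2.1 = 1 then (x.1, 0, 0, 0)
    else (x.1, x.2.1, x.2.2.1 - 1, 0)

/-- A height function that strictly decreases under `broomPar` off the root. -/
def broomDep (x : Bool × ℕ × ℕ × ℕ) : ℕ :=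
  if x = (false, 0, 0, 0) then 0 else x.2.2.1 + 1

/-- The finite part of the double broom with `N` spokes of length `h` per hub and `N` leaves per
spoke. -/
def broomSet (N h : ℕ) : Finset (Bool × ℕ × ℕ × ℕ) :=
  Finset.univ ×ˢ Finset.range N ×ˢ Finset.range (h + 1) ×ˢ Finset.range N

/-- The node at distance `t ≤ h` from hub `σ` on the way to leaf `l` of spoke `i`. -/
def spokeNode (h : ℕ) (σ : Bool) (i l t : ℕ) : Bool × ℕ × ℕ × ℕ :=
  if t = 0 then (σ, 0, 0, 0) else if t < h then (σ, i, t, 0) else (σ, i, t, l)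

lemma mem_broomSet {N h : ℕ} {x : Bool × ℕ × ℕ × ℕ} :
    x ∈ broomSet N h ↔ x.2.1 < N ∧ x.2.2.1 ≤ h ∧ x.2.2.2 < N := by
  simp [broomSet]

lemma spokeNode_mem {N h : ℕ} {σ : Bool} {i l t : ℕ} (hi : i < N) (hl : l < N) (ht : t ≤ h) :
    spokeNode h σ i l t ∈ broomSet N h := by
  rw [mem_broomSet]; unfold spokeNode
  split_ifs <;> simp <;> omega

lemma broomPar_spokeNode {h : ℕ} {σ : Bool} {i l t : ℕ} (ht : t + 1 ≤ h) :
    broomPar (spokeNode h σ i l (t + 1)) = spokeNode h σ i l t := by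
  unfold broomPar spokeNode
  rcases Nat.eq_zero_or_pos t with rfl | h0
  · by_cases h1 : 1 < h <;> simp [h1]
  · have h1 : t ≠ 0 := by omega
    have h2 : t < h := by omega
    simp only [h1, h2, if_true, if_false]
    split_ifs <;> simp_all

lemma spokeNode_ne_root {h : ℕ} {σ : Bool} {i l t : ℕ} (ht : t ≠ 0) :
    spokeNode h σ i l t ≠ (false, 0, 0, 0) := by
  unfold spokeNode
  split_ifs <;> simp_all

lemma spokeNode_dist {h : ℕ} {σ : Bool} {i l t : ℕ} : (spokeNode h σ i l t).2.2.1 = t := by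
  unfold spokeNode; split_ifs <;> simp_all

lemma spokeNode_side {h : ℕ} {σ : Bool} {i l t : ℕ} : (spokeNode h σ i l t).1 = σ := by
  unfold spokeNode; split_ifs <;> simp_all

lemma spokeNode_spoke {h : ℕ} {σ : Bool} {i l t : ℕ} (ht : t ≠ 0) :
    (spokeNode h σ i l t).2.1 = i := by
  unfold spokeNode; split_ifs <;> simp_all

lemma spokeNode_leaf {h : ℕ} (hh : h ≠ 0) {σ : Bool} {i l : ℕ} :
    spokeNode h σ i l h = (σ, i, h, l) := by
  simp [spokeNode, hh]

lemma spokeNode_inner {h : ℕ} {σ : Bool} {i l l' t : ℕ} (ht : t < h) :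
    spokeNode h σ i l t = spokeNode h σ i l' t := by
  simp [spokeNode, ht]

/-- The tree path from a leaf at the root side to a leaf at the other hub; its apex is the root. -/
lemma treePath_direct {N h : ℕ} {i l j l' : ℕ} (hi : i < N) (hl : l < N) (hj : j < N)
    (hl' : l' < N) : TreePath broomPar (false, 0, 0, 0) (broomSet N h)
      (fun t => if t ≤ h then spokeNode h false i l (h - t)
        else spokeNode h true j l' (t - h - 1)) h (2 * h + 1) := by
  constructor
  · omega
  · intro t ht
    split_ifs
    · exact spokeNode_mem hi hl (by omega)
    · exact spokeNode_mem hj hl' (by omega)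
  · intro t ht t' ht' he
    split_ifs at he with h1 h2 h2
    · have := congrArg (fun x => x.2.2.1) he
      simp only [spokeNode_dist] at this; omega
    · have := congrArg (fun x => x.1) he
      simp [spokeNode_side] at this
    · have := congrArg (fun x => x.1) he
      simp [spokeNode_side] at this
    · have := congrArg (fun x => x.2.2.1) he
      simp only [spokeNode_dist] at this; omega
  · intro t ht
    simp only [ht.le, show t + 1 ≤ h from ht, if_true]
    refine ⟨spokeNode_ne_root (by omega), ?_⟩
    rw [show h - t = (h - (t + 1)) + 1 by omega]
    exact broomPar_spokeNode (by omega)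
  · intro t ht1 ht2
    rcases Nat.eq_or_lt_of_le ht1 with rfl | ht3
    · simp [spokeNode, broomPar]
    · have h1 : ¬ t ≤ h := by omega
      have h2 : ¬ t + 1 ≤ h := by omega
      simp only [h1, h2, if_false]
      refine ⟨spokeNode_ne_root (by omega), ?_⟩
      rw [show t + 1 - h - 1 = (t - h - 1) + 1 by omega]
      exact broomPar_spokeNode (by omega)

/-- The tree path between two leaves on different spokes of the same hub; its apex is the hub. -/
lemma treePath_twoArm {N h : ℕ} (σ : Bool) {i l i' l' : ℕ} (hi : i < N) (hl : l < N)
    (hi' : i' < N) (hl' : l' < N) (hii : i ≠ i') :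
    TreePath broomPar (false, 0, 0, 0) (broomSet N h)
      (fun t => if t ≤ h then spokeNode h σ i l (h - t)
        else spokeNode h σ i' l' (t - h)) h (2 * h) := by
  constructor
  · omega
  · intro t ht
    split_ifs
    · exact spokeNode_mem hi hl (by omega)
    · exact spokeNode_mem hi' hl' (by omega)
  · intro t ht t' ht' he
    have key : ∀ a b, b ≠ 0 → spokeNode h σ i l a ≠ spokeNode h σ i' l' b := by
      intro a b hb hab
      have h1 := congrArg (fun x => x.2.2.1) hab
      simp only [spokeNode_dist] at h1
      have h2 := congrArg (fun x => x.2.1) hab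
      simp only [spokeNode_spoke hb, spokeNode_spoke (h1 ▸ hb)] at h2
      exact hii h2
    split_ifs at he with h1 h2 h2
    · have := congrArg (fun x => x.2.2.1) he
      simp only [spokeNode_dist] at this; omega
    · exact absurd he (key _ _ (by omega))
    · exact absurd he.symm (key _ _ (by omega))
    · have := congrArg (fun x => x.2.2.1) he
      simp only [spokeNode_dist] at this; omega
  · intro t ht
    simp only [ht.le, show t + 1 ≤ h from ht, if_true]
    refine ⟨spokeNode_ne_root (by omega), ?_⟩
    rw [show h - t = (h - (t + 1)) + 1 by omega]
    exact broomPar_spokeNode (by omega)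
  · intro t ht1 ht2
    have h2 : ¬ t + 1 ≤ h := by omega
    simp only [h2, if_false]
    refine ⟨spokeNode_ne_root (by omega), ?_⟩
    rcases Nat.eq_or_lt_of_le ht1 with rfl | ht3
    · rw [show h + 1 - h = 0 + 1 by omega, broomPar_spokeNode (by omega)]
      simp [spokeNode]
    · have h1 : ¬ t ≤ h := by omega
      simp only [h1, if_false]
      rw [show t + 1 - h = (t - h) + 1 by omega]
      exact broomPar_spokeNode (by omega)

section Broom

variable {A B : Finset ℕ} {χ : Finset ℕ → ℕ} {V : Finset ℕ} {f g : Bool × ℕ × ℕ × ℕ → ℕ} {N h : ℕ}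

/-- Leaves of opposite sides are adjacent, being joined by a path of odd length. -/
lemma leaves_adj (hAB : Disjoint A B) (hh : h ≠ 0)
    (hT : TreeEmb broomPar (false, 0, 0, 0) (broomSet N h) A B χ V f g)
    {i l j l' : ℕ} (hi : i < N) (hl : l < N) (hj : j < N) (hl' : l' < N) :
    BAdj A B (f (false, i, h, l)) (f (true, j, h, l')) := by
  have hP := treePath_direct (h := h) hi hl hj hl'
  have := BAdj.chain hAB (fun t => f ((fun t => if t ≤ h then spokeNode h false i l (h - t)
        else spokeNode h true j l' (t - h - 1)) t)) h (fun t ht => (hP.edge hT ht).1)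
  simp only [Nat.zero_le, if_true, show ¬ (2 * h + 1 ≤ h) by omega, if_false, Nat.sub_zero,
    show 2 * h + 1 - h - 1 = h by omega, spokeNode_leaf hh] at this
  exact this

/-- If two edges from leaves `b`, `b'` on spokes of side `!σ` to leaves of the spoke `a` on side
`σ` both have as colour the vertex at position `τ` of the spoke `a`, there is a loose cycle. -/
lemma cycle_of_repeat (hAB : Disjoint A B) (hV : A ∪ B ⊆ V) (hh : h ≠ 0)
    (hT : TreeEmb broomPar (false, 0, 0, 0) (broomSet N h) A B χ V f g) (σ : Bool)
    {a b b' τ : ℕ} (ha : a < N) (hb : b < N) (hb' : b' < N) (hbb : b ≠ b') (hτ : τ < h)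
    (hc : χ {f (!σ, b, h, a), f (σ, a, h, b)} = f (spokeNode h σ a 0 τ))
    (hc' : χ {f (!σ, b', h, a), f (σ, a, h, b')} = f (spokeNode h σ a 0 τ)) :
    HasLooseCycle (2 * h + 2) (Extension (completeBipartiteEdges A B) χ) := by
  have hN : 0 < N := by omega
  have hP := treePath_twoArm (h := h) (!σ) hb' ha hb ha hbb.symm
  have hend0 : (if 0 ≤ h then spokeNode h (!σ) b' a (h - 0)
        else spokeNode h (!σ) b a (0 - h)) = (!σ, b', h, a) := by
    simp [spokeNode_leaf hh]
  have hendM : (if 2 * h ≤ h then spokeNode h (!σ) b' a (h - 2 * h)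
        else spokeNode h (!σ) b a (2 * h - h)) = (!σ, b, h, a) := by
    simp [show ¬ (2 * h ≤ h) by omega, show 2 * h - h = h by omega, spokeNode_leaf hh]
  have hside : ∀ t (x : Bool × ℕ × ℕ × ℕ), x.1 = σ → (fun t => if t ≤ h then
        spokeNode h (!σ) b' a (h - t) else spokeNode h (!σ) b a (t - h)) t ≠ x := by
    rintro t x hx rfl
    dsimp only at hx
    split_ifs at hx <;> simp [spokeNode_side] at hx
  have hlm : ∀ y, spokeNode h σ a 0 τ ≠ (σ, a, h, y) := by
    intro y he
    have := congrArg (fun x => x.2.2.1) he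
    simp only [spokeNode_dist] at this; omega
  have hadj : ∀ x < N, BAdj A B (f (!σ, x, h, a)) (f (σ, a, h, x)) := by
    intro x hx
    cases σ
    · exact (leaves_adj hAB hh hT ha hx hx ha).symm
    · exact leaves_adj hAB hh hT hx ha ha hx
  refine hP.cycle_two hT hV (by omega) (m := spokeNode h σ a 0 τ) (w := (σ, a, h, b))
    (w' := (σ, a, h, b')) (spokeNode_mem ha hN hτ.le) (mem_broomSet.2 ⟨ha, le_rfl, hb⟩)
    (mem_broomSet.2 ⟨ha, le_rfl, hb'⟩) (hlm _) (hlm _) (by simpa using hbb)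
    (fun t _ => hside t _ spokeNode_side) (fun t _ => hside t _ rfl) (fun t _ => hside t _ rfl)
    ?_ ?_ ?_ ?_
  · rw [hendM]; exact hadj b hb
  · rw [hend0]; exact hadj b' hb'
  · rw [hendM]; exact hc
  · rw [hend0]; exact hc'

/-- A double broom with `2h+1` spokes per hub and `2h+1` leaves per spoke forces a loose
`(2h+2)`-cycle: the edge between leaf `j` of spoke `i` at the root and leaf `i` of spoke `j` at the
other hub has a colour lying on one of the two spokes, and by pigeonhole some colour repeats. -/
lemma cycle_of_broom (hAB : Disjoint A B) (hV : A ∪ B ⊆ V) (hh : h ≠ 0)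
    (hT : TreeEmb broomPar (false, 0, 0, 0) (broomSet (2 * h + 1) h) A B χ V f g)
    (hχ : ∀ x y, BAdj A B x y → χ {x, y} ≠ x ∧ χ {x, y} ≠ y) :
    HasLooseCycle (2 * h + 2) (Extension (completeBipartiteEdges A B) χ) := by
  by_contra hno
  have key : ∀ p : ℕ × ℕ, ∃ z : Bool × ℕ, p.1 < 2 * h + 1 → p.2 < 2 * h + 1 →
      z.2 < h ∧ χ {f (false, p.1, h, p.2), f (true, p.2, h, p.1)} =
        f (spokeNode h z.1 (if z.1 then p.2 else p.1) 0 z.2) := by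
    rintro ⟨i, j⟩
    by_cases hij : i < 2 * h + 1 ∧ j < 2 * h + 1
    swap
    · exact ⟨(false, 0), fun h1 h2 => absurd ⟨h1, h2⟩ hij⟩
    obtain ⟨hi, hj⟩ := hij
    have hadj := leaves_adj hAB hh hT hi hj hj hi
    by_contra! hcon
    apply hno
    have hP := treePath_direct (h := h) hi hj hj hi
    refine hP.cycle_one hT hV (by omega) (by omega) ?_ ?_
    all_goals
      simp only [Nat.zero_le, if_true, show ¬ (2 * h + 1 ≤ h) by omega, if_false, Nat.sub_zero,
        show 2 * h + 1 - h - 1 = h by omega, spokeNode_leaf hh]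
    · exact hadj.symm
    · intro t ht
      rw [Finset.pair_comm]
      by_cases hth : t ≤ h
      · simp only [hth, if_true]
        rcases Nat.eq_zero_or_pos t with rfl | h0
        · rw [Nat.sub_zero, spokeNode_leaf hh]; exact (hχ _ _ hadj).1
        · have := (hcon (false, h - t)).2.2 (by simp; omega)
          rw [spokeNode_inner (l' := j) (by simp; omega)] at this
          simpa using this
      · simp only [hth, if_false]
        by_cases htM : t = 2 * h + 1
        · subst htM
          rw [show 2 * h + 1 - h - 1 = h by omega, spokeNode_leaf hh]; exact (hχ _ _ hadj).2
        · have := (hcon (true, t - h - 1)).2.2 (by simp; omega)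
          rw [spokeNode_inner (l' := i) (by simp; omega)] at this
          simpa using this
  choose z hz using key
  obtain ⟨p, hp, p', hp', hne, heq⟩ := Finset.exists_ne_map_eq_of_card_lt_of_maps_to
    (s := Finset.range (2 * h + 1) ×ˢ Finset.range (2 * h + 1))
    (t := (Finset.univ : Finset Bool) ×ˢ Finset.range h ×ˢ Finset.range (2 * h + 1))
    (f := fun p => ((z p).1, (z p).2, if (z p).1 then p.2 else p.1))
    (by
      simp only [Finset.card_product, Finset.card_range, Finset.card_univ, Fintype.card_bool]
      nlinarith)
    (by
      intro p hp
      simp only [Finset.coe_product, Finset.coe_range, Set.mem_prod, Set.mem_Iio] at hp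
      have := (hz p hp.1 hp.2).1
      simp only [Finset.coe_product, Finset.coe_range, Set.mem_prod, Set.mem_Iio, Finset.coe_univ,
        Set.mem_univ, true_and]
      refine ⟨this, ?_⟩
      split_ifs
      exacts [hp.2, hp.1])
  obtain ⟨i, j⟩ := p
  obtain ⟨i', j'⟩ := p'
  simp only [Finset.mem_product, Finset.mem_range] at hp hp'
  obtain ⟨hτ, hc⟩ := hz (i, j) hp.1 hp.2
  obtain ⟨hτ', hc'⟩ := hz (i', j') hp'.1 hp'.2
  generalize z (i, j) = y at *
  generalize z (i', j') = y' at *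
  obtain ⟨σ, τ⟩ := y
  obtain ⟨σ', τ'⟩ := y'
  simp only [Prod.mk.injEq] at heq
  obtain ⟨rfl, rfl, h3⟩ := heq
  cases σ
  · simp only [Bool.false_eq_true, if_false] at h3 hc hc'
    subst h3
    refine hno (cycle_of_repeat hAB hV hh hT false hp.1 hp.2 hp'.2 (by simpa using hne) hτ ?_ ?_)
    · rw [Finset.pair_comm]; exact hc
    · rw [Finset.pair_comm]; exact hc'
  · simp only [if_true] at h3 hc hc'
    subst h3
    exact hno (cycle_of_repeat hAB hV hh hT true hp.2 hp.1 hp'.1 (by simpa using hne) hτ hc hc')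

end Broom

/-! ### The number of colours -/

lemma HasLooseCycle.mono {k : ℕ} {E E' : Finset (Finset ℕ)} (h : HasLooseCycle k E)
    (hE : E ⊆ E') : HasLooseCycle k E' := by
  obtain ⟨e, v, h1, h2, h3, h4⟩ := h
  exact ⟨e, v, h1, h2, fun i => hE (h3 i), h4⟩

lemma extension_mono {A B A' B' : Finset ℕ} (hA : A ⊆ A') (hB : B ⊆ B') (χ : Finset ℕ → ℕ) :
    Extension (completeBipartiteEdges A B) χ ⊆ Extension (completeBipartiteEdges A' B') χ :=
  Finset.image_subset_image (Finset.image_subset_image (Finset.product_subset_product hA hB))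

/-- In a coloured complete bipartite graph whose extension has no loose `(2h+2)`-cycle, the number
of colours outside the vertex set is linear in the number of vertices: vertices whose
deletion destroys few colours are deleted one at a time, and if there is no such vertex then a double
broom embeds. -/
lemma card_colourSet_le {A₀ B₀ : Finset ℕ} {χ : Finset ℕ → ℕ} {h : ℕ} (hh : h ≠ 0)
    (hAB : Disjoint A₀ B₀) (hχ : ∀ x y, BAdj A₀ B₀ x y → χ {x, y} ≠ x ∧ χ {x, y} ≠ y)
    (hno : ¬ HasLooseCycle (2 * h + 2) (Extension (completeBipartiteEdges A₀ B₀) χ)) (M : ℕ) :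
    ∀ A B : Finset ℕ, A ⊆ A₀ → B ⊆ B₀ → A.card + B.card = M →
      (colourSet A B χ (A₀ ∪ B₀)).card ≤ 4 * (broomSet (2 * h + 1) h).card * M := by
  induction M with
  | zero =>
    intro A B _ _ hM
    have hA : A = ∅ := Finset.card_eq_zero.1 (by omega)
    simp [colourSet, completeBipartiteEdges, hA]
  | succ M ih =>
    intro A B hA hB hM
    set D := 4 * (broomSet (2 * h + 1) h).card with hD
    have hdis : Disjoint A B := Finset.disjoint_of_subset_left hA
      (Finset.disjoint_of_subset_right hB hAB)
    by_cases hG : ∀ v ∈ A ∪ B,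
      D < (colourSet A B χ (A₀ ∪ B₀) \ colourSet (A.erase v) (B.erase v) χ (A₀ ∪ B₀)).card
    · exfalso
      have hne : (A ∪ B).Nonempty := by
        rw [← Finset.card_pos, Finset.card_union_of_disjoint hdis]; omega
      obtain ⟨r, hr⟩ := hne
      have hdepth : ∀ i : Bool × ℕ × ℕ × ℕ, i ≠ (false, 0, 0, 0) →
          broomDep (broomPar i) < broomDep i := by
        intro i hi
        unfold broomDep broomPar
        simp only [hi, if_false]
        split_ifs <;> simp_all
        omega
      obtain ⟨f, g, hT⟩ := exists_treeEmb broomPar broomDep (false, 0, 0, 0) hdepth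
        (by intro i hi; simp [broomDep, hi]) (greedy_of_card hG) hr (broomSet (2 * h + 1) h)
        (by
          intro i hi _
          rw [mem_broomSet] at hi ⊢
          unfold broomPar
          split_ifs <;> simp <;> omega) le_rfl
      refine hno ((cycle_of_broom hdis (Finset.union_subset_union hA hB) hh hT ?_).mono
        (extension_mono hA hB χ))
      intro x y hxy
      refine hχ x y ?_
      rcases hxy with hxy | hxy
      · exact Or.inl ⟨hA hxy.1, hB hxy.2⟩
      · exact Or.inr ⟨hB hxy.1, hA hxy.2⟩
    · push Not at hG
      obtain ⟨v, hv, hcard⟩ := hG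
      have hM' : (A.erase v).card + (B.erase v).card = M := by
        rcases Finset.mem_union.1 hv with hv | hv
        · rw [Finset.card_erase_of_mem hv,
            Finset.erase_eq_of_notMem (Finset.disjoint_left.1 hdis hv)]
          have := Finset.card_pos.2 ⟨v, hv⟩
          omega
        · rw [Finset.card_erase_of_mem hv,
            Finset.erase_eq_of_notMem (Finset.disjoint_right.1 hdis hv)]
          have := Finset.card_pos.2 ⟨v, hv⟩
          omega
      have h1 := ih (A.erase v) (B.erase v) ((Finset.erase_subset _ _).trans hA)
        ((Finset.erase_subset _ _).trans hB) hM'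
      have h2 := Finset.le_card_sdiff (colourSet (A.erase v) (B.erase v) χ (A₀ ∪ B₀))
        (colourSet A B χ (A₀ ∪ B₀))
      rw [Nat.mul_succ]
      omega

/-- The total number of colours is linear in the number of vertices. -/
lemma card_colours_le {A B : Finset ℕ} {χ : Finset ℕ → ℕ} {h : ℕ} (hh : h ≠ 0)
    (hAB : Disjoint A B) (hχ : ∀ x y, BAdj A B x y → χ {x, y} ≠ x ∧ χ {x, y} ≠ y)
    (hno : ¬ HasLooseCycle (2 * h + 2) (Extension (completeBipartiteEdges A B) χ)) :
    ((completeBipartiteEdges A B).image χ).card ≤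
      (4 * (broomSet (2 * h + 1) h).card + 1) * (A.card + B.card) := by
  have h1 := card_colourSet_le hh hAB hχ hno _ A B subset_rfl subset_rfl rfl
  have h2 := Finset.le_card_sdiff (A ∪ B) ((completeBipartiteEdges A B).image χ)
  have h3 := Finset.card_union_le A B
  unfold colourSet at h1
  rw [add_mul, one_mul]
  omega

/-! ### Sparseness of repeated colours -/

/-- A complete bipartite graph `K_{ℓ,ℓ}` whose edge colours are distinct and avoid its vertices
carries a loose `2ℓ`-cycle along `x 0, y 0, x 1, y 1, …`. -/
lemma hasLooseCycle_of_rainbow {A B : Finset ℕ} {χ : Finset ℕ → ℕ} {l : ℕ} (hl : 2 ≤ l)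
    (hAB : Disjoint A B) (x y : Fin l → ℕ) (hxA : ∀ i, x i ∈ A) (hyB : ∀ i, y i ∈ B)
    (hx : Function.Injective x) (hy : Function.Injective y)
    (hc : ∀ i j i' j', χ {x i, y j} = χ {x i', y j'} → i = i' ∧ j = j')
    (hcx : ∀ i j m, χ {x i, y j} ≠ x m) (hcy : ∀ i j m, χ {x i, y j} ≠ y m) :
    HasLooseCycle (2 * l) (Extension (completeBipartiteEdges A B) χ) := by
  have hl0 : 0 < l := by omega
  let I : ℕ → Fin l := fun t => ⟨t % l, Nat.mod_lt _ hl0⟩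
  have hI : ∀ t < l, ∀ t' < l, I t = I t' → t = t' := by
    intro t ht t' ht' h
    have h2 : t % l = t' % l := congrArg Fin.val h
    rwa [Nat.mod_eq_of_lt ht, Nat.mod_eq_of_lt ht'] at h2
  have hIs : ∀ t < l, I t ≠ I (t + 1) := by
    intro t ht h
    have h2 : t % l = (t + 1) % l := congrArg Fin.val h
    rw [Nat.mod_eq_of_lt ht] at h2
    rcases Nat.lt_or_ge (t + 1) l with h3 | h3
    · rw [Nat.mod_eq_of_lt h3] at h2; omega
    · rw [show t + 1 = l by omega, Nat.mod_self] at h2; omega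
  have hxy : ∀ i j, x i ≠ y j := fun i j h =>
    Finset.disjoint_left.1 hAB (hxA i) (h ▸ hyB j)
  refine hasLooseCycle_of_seq (k := 2 * l) (by omega)
    (fun t => if t % 2 = 0 then x (I (t / 2)) else y (I (t / 2)))
    (fun t => χ {x (I ((t + 1) / 2)), y (I (t / 2))}) ?_ ?_ ?_ ?_ ?_
  · intro t ht t' ht' h
    split_ifs at h with h1 h2 h2
    · have := hI _ (by omega) _ (by omega) (hx h); omega
    · exact absurd h (hxy _ _)
    · exact absurd h.symm (hxy _ _)
    · have := hI _ (by omega) _ (by omega) (hy h); omega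
  · intro t ht t' ht' h
    obtain ⟨h1, h2⟩ := hc _ _ _ _ h
    have h3 := hI _ (by omega) _ (by omega) h2
    by_contra hne
    rcases Nat.mod_two_eq_zero_or_one t with h0 | h0
    · have e1 : (t + 1) / 2 = t / 2 := by omega
      have e2 : (t' + 1) / 2 = t / 2 + 1 := by omega
      rw [e1, e2] at h1
      exact hIs _ (by omega) h1
    · have e1 : (t + 1) / 2 = t / 2 + 1 := by omega
      have e2 : (t' + 1) / 2 = t / 2 := by omega
      rw [e1, e2] at h1
      exact hIs _ (by omega) h1.symm
  · intro t _ t' _ h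
    split_ifs at h with h1
    · exact hcx _ _ _ h.symm
    · exact hcy _ _ _ h.symm
  · intro t ht
    rcases Nat.mod_two_eq_zero_or_one t with h0 | h0
    · have e1 : (t + 1) / 2 = t / 2 := by omega
      have e2 : (t + 1) % 2 = 1 := by omega
      simp only [h0, e1, e2, if_true, one_ne_zero, if_false]
      exact triple_mem_extension (Or.inl ⟨hxA _, hyB _⟩) rfl
    · have e1 : (t + 1) / 2 = t / 2 + 1 := by omega
      have e2 : (t + 1) % 2 = 0 := by omega
      simp only [h0, e1, e2, if_true, one_ne_zero, if_false]
      exact triple_mem_extension (Or.inr ⟨hyB _, hxA _⟩) (by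
        rw [Finset.pair_comm (y _) (x _)])
  · have e1 : (2 * l - 1) / 2 = l - 1 := by omega
    have e2 : (2 * l - 1) % 2 = 1 := by omega
    have e3 : (2 * l - 1 + 1) / 2 = l := by omega
    have e4 : I 0 = I l := by simp [I]
    simp only [e1, e2, e3, Nat.zero_mod, Nat.zero_div, if_true, one_ne_zero, if_false, e4]
    exact triple_mem_extension (Or.inr ⟨hyB _, hxA _⟩) (by
      rw [Finset.pair_comm (y _) (x _)])

/-- Lower bound for the number of homomorphisms from `K_{p+1,p+1}` to a bipartite graph with
adjacency weights `w`, by applying the power mean inequality on each side. -/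
lemma hom_count {s : ℕ} (w : Fin s → Fin s → ℕ) (p : ℕ) :
    (∑ a, ∑ b, w a b) ^ ((p + 1) * (p + 1)) ≤ s ^ (2 * p * (p + 1)) *
      ∑ y : Fin (p + 1) → Fin s, ∑ x : Fin (p + 1) → Fin s, ∏ i, ∏ j, w (x i) (y j) := by
  have h1 : (∑ a, ∑ b, w a b) ^ (p + 1) ≤ s ^ p * ∑ a, (∑ b, w a b) ^ (p + 1) := by
    simpa using pow_sum_le_card_mul_sum_pow (s := Finset.univ) (f := fun a => ∑ b, w a b)
      (fun _ _ => Nat.zero_le _) p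
  have h2 : ∑ a, (∑ b, w a b) ^ (p + 1) = ∑ y : Fin (p + 1) → Fin s, ∑ a, ∏ j, w a (y j) := by
    rw [Finset.sum_comm]
    exact Finset.sum_congr rfl fun a _ => Fintype.sum_pow _ _
  have h3 : (∑ y : Fin (p + 1) → Fin s, ∑ a, ∏ j, w a (y j)) ^ (p + 1) ≤
      (s ^ (p + 1)) ^ p * ∑ y : Fin (p + 1) → Fin s, (∑ a, ∏ j, w a (y j)) ^ (p + 1) := by
    simpa using pow_sum_le_card_mul_sum_pow (s := Finset.univ)
      (f := fun y : Fin (p + 1) → Fin s => ∑ a, ∏ j, w a (y j)) (fun _ _ => Nat.zero_le _) p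
  have h4 : ∀ y : Fin (p + 1) → Fin s, (∑ a, ∏ j, w a (y j)) ^ (p + 1) =
      ∑ x : Fin (p + 1) → Fin s, ∏ i, ∏ j, w (x i) (y j) := fun y => Fintype.sum_pow _ _
  simp only [h4] at h3
  rw [h2] at h1
  calc (∑ a, ∑ b, w a b) ^ ((p + 1) * (p + 1)) = ((∑ a, ∑ b, w a b) ^ (p + 1)) ^ (p + 1) :=
        pow_mul _ _ _
    _ ≤ (s ^ p * ∑ y : Fin (p + 1) → Fin s, ∑ a, ∏ j, w a (y j)) ^ (p + 1) :=
        Nat.pow_le_pow_left h1 _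
    _ = s ^ (p * (p + 1)) * (∑ y : Fin (p + 1) → Fin s, ∑ a, ∏ j, w a (y j)) ^ (p + 1) := by
        rw [mul_pow, pow_mul]
    _ ≤ s ^ (p * (p + 1)) * ((s ^ (p + 1)) ^ p * _) := Nat.mul_le_mul_left _ h3
    _ = _ := by
        rw [← mul_assoc, ← pow_mul, ← pow_add]
        congr 2
        ring

/-- If after fixing all other coordinates the predicate `P` leaves at most `s / j` choices for the
coordinate `t`, then it holds for at most a `1 / j` fraction of all functions. -/
lemma card_mul_le_of_fibre {ι : Type} [Fintype ι] [DecidableEq ι] {s j : ℕ} (hs : 0 < s)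
    (P : (ι → Fin s) → Prop) [DecidablePred P] (t : ι)
    (hP : ∀ w : ι → Fin s, j * (Finset.univ.filter fun v => P (Function.update w t v)).card ≤ s) :
    j * (Finset.univ.filter P).card ≤ s ^ Fintype.card ι := by
  have h1 : (Finset.univ.filter P).card * s =
      ∑ w : ι → Fin s, (Finset.univ.filter fun v => P (Function.update w t v)).card := by
    simp only [Finset.card_filter]
    rw [Finset.sum_mul]
    have h2 : ∀ w : ι → Fin s, (if P w then 1 else 0) * s = ∑ _v : Fin s, if P w then 1 else 0 := by
      intro w; simp [mul_comm]
    simp only [h2]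
    rw [← Fintype.sum_prod_type', ← Fintype.sum_prod_type']
    refine Fintype.sum_equiv
      ⟨fun q => (Function.update q.1 t q.2, q.1 t), fun q => (Function.update q.1 t q.2, q.1 t),
        fun q => by simp, fun q => by simp⟩ _ _ ?_
    intro q
    simp
  have h3 : j * (Finset.univ.filter P).card * s ≤ s ^ Fintype.card ι * s := by
    rw [mul_assoc, h1, Finset.mul_sum]
    refine (Finset.sum_le_card_nsmul _ _ s fun w _ => hP w).trans ?_
    simp
  exact Nat.le_of_mul_le_mul_right h3 hs

/-- Quantified sparseness of repeated colours in a colouring of the `s × s` grid: a set `H` of cells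
in which every colour has degree at most `s / j` in each row and column has at most
`(Q / j) ^ (1 / L) * s ^ 2` cells. -/
def SparseRepeats (L Q : ℕ) {s : ℕ} {γ : Type} [DecidableEq γ] (c : Fin s → Fin s → γ) : Prop :=
  ∀ (j : ℕ) (H : Finset (Fin s × Fin s)), 1 ≤ j → j ≤ s →
    (∀ a u, j * (Finset.univ.filter fun b => (a, b) ∈ H ∧ c a b = u).card ≤ s) →
    (∀ b u, j * (Finset.univ.filter fun a => (a, b) ∈ H ∧ c a b = u).card ≤ s) →
    j * H.card ^ L ≤ Q * s ^ (2 * L)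

lemma card_union_six_le {ι : Type} [DecidableEq ι] (a b c d e f : Finset ι) :
    (a ∪ b ∪ c ∪ d ∪ e ∪ f).card ≤ a.card + b.card + c.card + d.card + e.card + f.card := by
  have := Finset.card_union_le (a ∪ b ∪ c ∪ d ∪ e) f
  have := Finset.card_union_le (a ∪ b ∪ c ∪ d) e
  have := Finset.card_union_le (a ∪ b ∪ c) d
  have := Finset.card_union_le (a ∪ b) c
  have := Finset.card_union_le a b
  omega

/-- The case of `hom_count` where the weights are the indicator of `H`; a homomorphism is a map `w` on
the disjoint union of the two sides of `K_{p+1,p+1}`. -/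
lemma card_pow_le_card_hom {s : ℕ} (H : Finset (Fin s × Fin s)) (p : ℕ)
    [DecidablePred fun w : Fin (p + 1) ⊕ Fin (p + 1) → Fin s =>
      ∀ i k, (w (.inl i), w (.inr k)) ∈ H] :
    H.card ^ ((p + 1) * (p + 1)) ≤ s ^ (2 * p * (p + 1)) *
      (Finset.univ.filter fun w : Fin (p + 1) ⊕ Fin (p + 1) → Fin s =>
        ∀ i k, (w (.inl i), w (.inr k)) ∈ H).card := by
  have hcount := hom_count (fun a b : Fin s => if (a, b) ∈ H then 1 else 0) p
  have e1 : ∑ a : Fin s, ∑ b : Fin s, (if (a, b) ∈ H then 1 else 0) = H.card := by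
    rw [← Fintype.sum_prod_type' (f := fun a b => if (a, b) ∈ H then 1 else 0)]
    simp
  have e2 : ∑ y : Fin (p + 1) → Fin s, ∑ x : Fin (p + 1) → Fin s, ∏ i, ∏ k,
      (if (x i, y k) ∈ H then 1 else 0) =
      (Finset.univ.filter fun w : Fin (p + 1) ⊕ Fin (p + 1) → Fin s =>
        ∀ i k, (w (.inl i), w (.inr k)) ∈ H).card := by
    rw [Finset.card_filter, Finset.sum_comm, ← Fintype.sum_prod_type']
    refine Fintype.sum_equiv (Equiv.sumArrowEquivProdArrow _ _ _).symm _ _ ?_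
    rintro ⟨x, y⟩
    simp only [Finset.prod_ite_zero, Finset.prod_const_one, Finset.mem_univ, true_imp_iff]
    refine if_congr ?_ rfl rfl
    rfl
  rwa [e1, e2] at hcount

/-- If no loose `2ℓ`-cycle is present then every homomorphism of `K_{ℓ,ℓ}` into `H` has a
degeneracy (a repeated vertex or colour, or a colour that is a vertex), and each degeneracy is
rare. -/
lemma sparseRepeats_of_no_cycle {A B : Finset ℕ} {χ : Finset ℕ → ℕ} {l s : ℕ} (hl : 2 ≤ l)
    (hAB : Disjoint A B) (hχ : ∀ x y, BAdj A B x y → χ {x, y} ≠ x ∧ χ {x, y} ≠ y)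
    (α β : Fin s → ℕ) (hα : Function.Injective α) (hβ : Function.Injective β)
    (hαA : ∀ a, α a ∈ A) (hβB : ∀ b, β b ∈ B)
    (hno : ¬ HasLooseCycle (2 * l) (Extension (completeBipartiteEdges A B) χ)) :
    SparseRepeats (l * l) (6 * l ^ 4) (fun a b => χ {α a, β b}) := by
  intro j H hj1 hjs hrow hcol
  set c : Fin s → Fin s → ℕ := fun a b => χ {α a, β b} with hc
  have hs : 0 < s := by omega
  let Hom : (Fin l ⊕ Fin l → Fin s) → Prop := fun w => ∀ i k, (w (.inl i), w (.inr k)) ∈ H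
  let P1 : (Fin l × Fin l) × (Fin l × Fin l) → (Fin l ⊕ Fin l → Fin s) → Prop := fun q w =>
    q.1.1 ≠ q.2.1 ∧ w (.inl q.1.1) = w (.inl q.2.1)
  let P2 : (Fin l × Fin l) × (Fin l × Fin l) → (Fin l ⊕ Fin l → Fin s) → Prop := fun q w =>
    q.1.2 ≠ q.2.2 ∧ w (.inr q.1.2) = w (.inr q.2.2)
  let P3 : (Fin l × Fin l) × (Fin l × Fin l) → (Fin l ⊕ Fin l → Fin s) → Prop := fun q w =>
    q.1.1 ≠ q.2.1 ∧ Hom w ∧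
      c (w (.inl q.1.1)) (w (.inr q.1.2)) = c (w (.inl q.2.1)) (w (.inr q.2.2))
  let P4 : (Fin l × Fin l) × (Fin l × Fin l) → (Fin l ⊕ Fin l → Fin s) → Prop := fun q w =>
    q.1.2 ≠ q.2.2 ∧ Hom w ∧
      c (w (.inl q.1.1)) (w (.inr q.1.2)) = c (w (.inl q.2.1)) (w (.inr q.2.2))
  let P5 : (Fin l × Fin l) × (Fin l × Fin l) → (Fin l ⊕ Fin l → Fin s) → Prop := fun q w =>
    q.1.1 ≠ q.2.1 ∧ c (w (.inl q.1.1)) (w (.inr q.1.2)) = α (w (.inl q.2.1))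
  let P6 : (Fin l × Fin l) × (Fin l × Fin l) → (Fin l ⊕ Fin l → Fin s) → Prop := fun q w =>
    q.1.2 ≠ q.2.2 ∧ c (w (.inl q.1.1)) (w (.inr q.1.2)) = β (w (.inr q.2.2))
  classical
  have hcard : Fintype.card (Fin l ⊕ Fin l) = 2 * l := by simp; ring
  have one : ∀ (P : Fin s → Prop) [DecidablePred P], (∀ u v, P u → P v → u = v) →
      j * (Finset.univ.filter P).card ≤ s := by
    intro P _ hP
    have : (Finset.univ.filter P).card ≤ 1 := by
      rw [Finset.card_le_one]
      intro u hu v hv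
      exact hP u v (Finset.mem_filter.1 hu).2 (Finset.mem_filter.1 hv).2
    calc j * (Finset.univ.filter P).card ≤ j * 1 := Nat.mul_le_mul_left _ this
      _ ≤ s := by omega
  have b1 : ∀ q, j * (Finset.univ.filter (P1 q)).card ≤ s ^ (2 * l) := by
    intro q
    rw [← hcard]
    refine card_mul_le_of_fibre hs _ (.inl q.1.1) fun w => one _ ?_
    rintro u v ⟨h1, h2⟩ ⟨_, h3⟩
    simp [h1.symm] at h2 h3
    rw [h2, h3]
  have b2 : ∀ q, j * (Finset.univ.filter (P2 q)).card ≤ s ^ (2 * l) := by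
    intro q
    rw [← hcard]
    refine card_mul_le_of_fibre hs _ (.inr q.1.2) fun w => one _ ?_
    rintro u v ⟨h1, h2⟩ ⟨_, h3⟩
    simp [h1.symm] at h2 h3
    rw [h2, h3]
  have b3 : ∀ q, j * (Finset.univ.filter (P3 q)).card ≤ s ^ (2 * l) := by
    intro q
    rw [← hcard]
    refine card_mul_le_of_fibre hs _ (.inl q.1.1) fun w => ?_
    refine le_trans (Nat.mul_le_mul_left _ (Finset.card_le_card ?_))
      (hcol (w (.inr q.1.2)) (c (w (.inl q.2.1)) (w (.inr q.2.2))))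
    intro v hv
    obtain ⟨h1, h2, h3⟩ := (Finset.mem_filter.1 hv).2
    have h4 := h2 q.1.1 q.1.2
    simp [h1.symm] at h3 h4
    simp [h3, h4]
  have b4 : ∀ q, j * (Finset.univ.filter (P4 q)).card ≤ s ^ (2 * l) := by
    intro q
    rw [← hcard]
    refine card_mul_le_of_fibre hs _ (.inr q.1.2) fun w => ?_
    refine le_trans (Nat.mul_le_mul_left _ (Finset.card_le_card ?_))
      (hrow (w (.inl q.1.1)) (c (w (.inl q.2.1)) (w (.inr q.2.2))))
    intro v hv
    obtain ⟨h1, h2, h3⟩ := (Finset.mem_filter.1 hv).2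
    have h4 := h2 q.1.1 q.1.2
    simp [h1.symm] at h3 h4
    simp [h3, h4]
  have b5 : ∀ q, j * (Finset.univ.filter (P5 q)).card ≤ s ^ (2 * l) := by
    intro q
    rw [← hcard]
    refine card_mul_le_of_fibre hs _ (.inl q.2.1) fun w => one _ ?_
    rintro u v ⟨h1, h2⟩ ⟨_, h3⟩
    simp [h1] at h2 h3
    exact hα (h2.symm.trans h3)
  have b6 : ∀ q, j * (Finset.univ.filter (P6 q)).card ≤ s ^ (2 * l) := by
    intro q
    rw [← hcard]
    refine card_mul_le_of_fibre hs _ (.inr q.2.2) fun w => one _ ?_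
    rintro u v ⟨h1, h2⟩ ⟨_, h3⟩
    simp [h1] at h2 h3
    exact hβ (h2.symm.trans h3)
  have hcover : Finset.univ.filter Hom ⊆ Finset.univ.biUnion fun q =>
      Finset.univ.filter (P1 q) ∪ Finset.univ.filter (P2 q) ∪ Finset.univ.filter (P3 q) ∪
      Finset.univ.filter (P4 q) ∪ Finset.univ.filter (P5 q) ∪ Finset.univ.filter (P6 q) := by
    intro w hw
    have hw : Hom w := (Finset.mem_filter.1 hw).2
    by_contra hcon
    simp only [Finset.mem_biUnion, Finset.mem_univ, Finset.mem_union, Finset.mem_filter, true_and,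
      not_exists, not_or] at hcon
    have hadj : ∀ i k, BAdj A B (α (w (.inl i))) (β (w (.inr k))) :=
      fun i k => Or.inl ⟨hαA _, hβB _⟩
    refine hno (hasLooseCycle_of_rainbow hl hAB (fun i => α (w (.inl i)))
      (fun k => β (w (.inr k))) (fun _ => hαA _) (fun _ => hβB _) ?_ ?_ ?_ ?_ ?_)
    · intro i i' h
      by_contra hne
      exact (hcon ((i, i), (i', i))).1.1.1.1.1 ⟨hne, hα h⟩
    · intro i i' h
      by_contra hne
      exact (hcon ((i, i), (i, i'))).1.1.1.1.2 ⟨hne, hβ h⟩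
    · intro i k i' k' h
      constructor
      · by_contra hne
        exact (hcon ((i, k), (i', k'))).1.1.1.2 ⟨hne, hw, h⟩
      · by_contra hne
        exact (hcon ((i, k), (i', k'))).1.1.2 ⟨hne, hw, h⟩
    · intro i k m h
      by_cases hne : i = m
      · subst hne
        exact (hχ _ _ (hadj i k)).1 h
      · exact (hcon ((i, k), (m, k))).1.2 ⟨hne, h⟩
    · intro i k m h
      by_cases hne : k = m
      · subst hne
        exact (hχ _ _ (hadj i k)).2 h
      · exact (hcon ((i, k), (i, m))).2 ⟨hne, h⟩
  have hHom : j * (Finset.univ.filter Hom).card ≤ 6 * l ^ 4 * s ^ (2 * l) := by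
    have h1 := (Finset.card_le_card hcover).trans Finset.card_biUnion_le
    refine (Nat.mul_le_mul_left j h1).trans ?_
    rw [Finset.mul_sum]
    refine (Finset.sum_le_card_nsmul _ _ (6 * s ^ (2 * l)) fun q _ => ?_).trans ?_
    · refine (Nat.mul_le_mul_left j (card_union_six_le _ _ _ _ _ _)).trans ?_
      have := b1 q; have := b2 q; have := b3 q; have := b4 q; have := b5 q; have := b6 q
      simp only [mul_add]
      omega
    · simp only [Finset.card_univ, Fintype.card_prod, Fintype.card_fin, smul_eq_mul]
      apply le_of_eq; ring
  obtain ⟨p, rfl⟩ : ∃ p, l = p + 1 := ⟨l - 1, by omega⟩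
  have hcount := card_pow_le_card_hom H p
  calc j * H.card ^ ((p + 1) * (p + 1))
      ≤ j * (s ^ (2 * p * (p + 1)) * (Finset.univ.filter Hom).card) := Nat.mul_le_mul_left _ hcount
    _ = s ^ (2 * p * (p + 1)) * (j * (Finset.univ.filter Hom).card) := by ring
    _ ≤ s ^ (2 * p * (p + 1)) * (6 * (p + 1) ^ 4 * s ^ (2 * (p + 1))) :=
        Nat.mul_le_mul_left _ hHom
    _ = 6 * (p + 1) ^ 4 * s ^ (2 * ((p + 1) * (p + 1))) := by
        rw [show 2 * ((p + 1) * (p + 1)) = 2 * p * (p + 1) + 2 * (p + 1) by ring, pow_add]; ring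

/-! ### Counting colourings with sparse repeats -/

/-- A function on `s` points takes at most `J` values on more than `s / J` points. -/
lemma card_heavy_le {s m J : ℕ} (f : Fin s → Fin m) (hs : 0 < s) :
    (Finset.univ.filter fun u => s < J * (Finset.univ.filter fun b => f b = u).card).card ≤ J := by
  set R := Finset.univ.filter fun u => s < J * (Finset.univ.filter fun b => f b = u).card with hR
  have h1 : R.card * s ≤ ∑ u ∈ R, J * (Finset.univ.filter fun b => f b = u).card := by
    rw [← smul_eq_mul]
    exact Finset.card_nsmul_le_sum _ _ _ fun u hu => (Finset.mem_filter.1 hu).2.le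
  have h2 : ∑ u ∈ R, (Finset.univ.filter fun b => f b = u).card ≤ s := by
    have := Finset.card_eq_sum_card_fiberwise (f := f) (s := Finset.univ) (t := Finset.univ)
      (fun _ _ => Finset.mem_coe.2 (Finset.mem_univ _))
    rw [Finset.card_univ, Fintype.card_fin] at this
    conv_rhs => rw [this]
    exact Finset.sum_le_sum_of_subset (Finset.subset_univ _)
  rw [← Finset.mul_sum] at h1
  exact Nat.le_of_mul_le_mul_right (h1.trans (Nat.mul_le_mul_left _ h2)) hs

/-- A set of at most `N` elements is contained in the first `N` entries of a list of length `N'`. -/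
lemma exists_list_cover {m N N' : ℕ} (hm : 0 < m) (hN : N ≤ N') (R : Finset (Fin m))
    (hR : R.card ≤ N) :
    ∃ ρ : Fin N' → Fin m, R ⊆ (Finset.univ.filter fun x : Fin N' => x.val < N).image ρ := by
  refine ⟨fun x => if h : x.val < R.card then (R.equivFin.symm ⟨x.val, h⟩).1 else ⟨0, hm⟩, ?_⟩
  intro u hu
  rw [Finset.mem_image]
  have hlt := (R.equivFin ⟨u, hu⟩).2
  refine ⟨⟨(R.equivFin ⟨u, hu⟩).1, by omega⟩, by simp; omega, ?_⟩
  simp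

/-- The number of functions to `{0, …, T + 1}` with sum at most `M` is at most `2 ^ (M + |E|)`,
whatever `T` is: sum the weights `2 ^ (T + 1 - t e)`. -/
lemma card_levels_le {E : Type} [Fintype E] [DecidableEq E] (T M : ℕ) :
    (Finset.univ.filter fun t : E → Fin (T + 2) => ∑ e, (t e).val ≤ M).card ≤
      2 ^ (M + Fintype.card E) := by
  set G := Finset.univ.filter fun t : E → Fin (T + 2) => ∑ e, (t e).val ≤ M with hG
  have h1 : ∀ t ∈ G, 2 ^ ((T + 1) * Fintype.card E) ≤ 2 ^ M * ∏ e, 2 ^ (T + 1 - (t e).val) := by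
    intro t ht
    have ht' : ∑ e, (t e).val ≤ M := (Finset.mem_filter.1 ht).2
    rw [Finset.prod_pow_eq_pow_sum, ← pow_add]
    refine Nat.pow_le_pow_right (by norm_num) ?_
    have h2 : ∑ e, (t e).val + ∑ e, (T + 1 - (t e).val) = (T + 1) * Fintype.card E := by
      rw [← Finset.sum_add_distrib, mul_comm, ← smul_eq_mul, ← Finset.card_univ,
        ← Finset.sum_const]
      exact Finset.sum_congr rfl fun e _ => by have := (t e).2; omega
    omega
  have h3 : ∑ t : E → Fin (T + 2), ∏ e, 2 ^ (T + 1 - (t e).val) ≤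
      2 ^ ((T + 2) * Fintype.card E) := by
    have h5 := Finset.prod_univ_sum (fun _ : E => (Finset.univ : Finset (Fin (T + 2))))
      (fun _ i => 2 ^ (T + 1 - i.val))
    rw [Fintype.piFinset_univ] at h5
    rw [← h5, Finset.prod_const, Finset.card_univ, pow_mul]
    refine Nat.pow_le_pow_left ?_ _
    have h6 : ∀ n, ∑ i ∈ Finset.range n, 2 ^ i ≤ 2 ^ n := by
      intro n
      induction n with
      | zero => simp
      | succ n ih => rw [Finset.sum_range_succ, pow_succ]; omega
    rw [Fin.sum_univ_eq_sum_range (fun i => 2 ^ (T + 1 - i)) (T + 2)]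
    exact (Finset.sum_range_reflect (fun i => 2 ^ i) (T + 2)).le.trans (h6 _)
  have h4 : G.card * 2 ^ ((T + 1) * Fintype.card E) ≤
      2 ^ (M + Fintype.card E) * 2 ^ ((T + 1) * Fintype.card E) := by
    calc G.card * 2 ^ ((T + 1) * Fintype.card E)
        ≤ ∑ t ∈ G, 2 ^ M * ∏ e, 2 ^ (T + 1 - (t e).val) := by
          rw [← smul_eq_mul]; exact Finset.card_nsmul_le_sum _ _ _ h1
      _ ≤ ∑ t : E → Fin (T + 2), 2 ^ M * ∏ e, 2 ^ (T + 1 - (t e).val) :=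
          Finset.sum_le_sum_of_subset (Finset.subset_univ _)
      _ ≤ 2 ^ M * 2 ^ ((T + 2) * Fintype.card E) := by
          rw [← Finset.mul_sum]; exact Nat.mul_le_mul_left _ h3
      _ = _ := by rw [← pow_add, ← pow_add]; congr 1; ring
  exact Nat.le_of_mul_le_mul_right h4 (by positivity)

/-- The cells of the grid whose colour has degree at most `s / J` in its row and in its column. -/
def lightCells {s m : ℕ} (ψ : Fin s → Fin s → Fin m) (J : ℕ) : Finset (Fin s × Fin s) :=
  Finset.univ.filter fun e =>
    J * (Finset.univ.filter fun b => ψ e.1 b = ψ e.1 e.2).card ≤ s ∧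
    J * (Finset.univ.filter fun a => ψ a e.2 = ψ e.1 e.2).card ≤ s

/-- `SparseRepeats` applied to the light cells; the power `2 ^ (L * i)` is an exact `L`-th power, so
`L`-th roots can be taken. -/
lemma card_lightCells_le {s m L Q i : ℕ} {ψ : Fin s → Fin s → Fin m} (hψ : SparseRepeats L Q ψ)
    (hL : L ≠ 0) (hi : 2 ^ (L * i) ≤ s) : 2 ^ i * (lightCells ψ (2 ^ (L * i))).card ≤ Q * s ^ 2 := by
  have h := hψ (2 ^ (L * i)) (lightCells ψ (2 ^ (L * i))) (Nat.one_le_two_pow) hi ?_ ?_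
  · have h2 : (2 ^ i * (lightCells ψ (2 ^ (L * i))).card) ^ L ≤ (Q * s ^ 2) ^ L := by
      rw [mul_pow, mul_pow, ← pow_mul, ← pow_mul, mul_comm i L]
      exact h.trans (Nat.mul_le_mul_right _ (Nat.le_self_pow hL Q))
    exact (Nat.pow_le_pow_iff_left hL).1 h2
  · intro a u
    rcases Finset.eq_empty_or_nonempty (Finset.univ.filter fun b =>
      (a, b) ∈ lightCells ψ (2 ^ (L * i)) ∧ ψ a b = u) with h0 | ⟨b₀, hb₀⟩
    · rw [h0]; simp
    · obtain ⟨h1, rfl⟩ := (Finset.mem_filter.1 hb₀).2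
      refine le_trans (Nat.mul_le_mul_left _ (Finset.card_le_card ?_)) (Finset.mem_filter.1 h1).2.1
      intro b hb
      simp only [Finset.mem_filter, Finset.mem_univ, true_and] at hb ⊢
      exact hb.2
  · intro b u
    rcases Finset.eq_empty_or_nonempty (Finset.univ.filter fun a =>
      (a, b) ∈ lightCells ψ (2 ^ (L * i)) ∧ ψ a b = u) with h0 | ⟨a₀, ha₀⟩
    · rw [h0]; simp
    · obtain ⟨h1, rfl⟩ := (Finset.mem_filter.1 ha₀).2
      refine le_trans (Nat.mul_le_mul_left _ (Finset.card_le_card ?_)) (Finset.mem_filter.1 h1).2.2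
      intro a ha
      simp only [Finset.mem_filter, Finset.mem_univ, true_and] at ha ⊢
      exact ha.2

lemma lightCells_anti {s m J J' : ℕ} (ψ : Fin s → Fin s → Fin m) (hJ : J ≤ J') :
    lightCells ψ J' ⊆ lightCells ψ J := by
  intro e he
  simp only [lightCells, Finset.mem_filter, Finset.mem_univ, true_and] at he ⊢
  exact ⟨(Nat.mul_le_mul_right _ hJ).trans he.1, (Nat.mul_le_mul_right _ hJ).trans he.2⟩

/-- The candidate colours of a cell: a cell of level `t ≤ T` takes one of the first `2 ^ (L t)`
entries of the level `t` list of its row or of its column; a cell of level `T + 1` is free. -/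
def candidates {s m L T : ℕ} (ρ κ : Fin s → Fin (T + 1) → Fin (2 ^ (L * T)) → Fin m)
    (t : Fin s × Fin s → Fin (T + 2)) (a b : Fin s) : Finset (Fin m) :=
  if h : (t (a, b)).val < T + 1 then
    (Finset.univ.filter fun x : Fin (2 ^ (L * T)) => x.val < 2 ^ (L * (t (a, b)).val)).image
        (ρ a ⟨(t (a, b)).val, h⟩) ∪
      (Finset.univ.filter fun x : Fin (2 ^ (L * T)) => x.val < 2 ^ (L * (t (a, b)).val)).image
        (κ b ⟨(t (a, b)).val, h⟩)
  else Finset.univ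

lemma card_filter_val_lt_le (N k : ℕ) : (Finset.univ.filter fun x : Fin N => x.val < k).card ≤ k := by
  have h : ((Finset.univ.filter fun x : Fin N => x.val < k).image Fin.val) ⊆ Finset.range k := by
    intro y hy
    obtain ⟨x, hx, rfl⟩ := Finset.mem_image.1 hy
    exact Finset.mem_range.2 (Finset.mem_filter.1 hx).2
  rw [← Finset.card_image_of_injective _ Fin.val_injective]
  simpa using Finset.card_le_card h

lemma card_candidates_le {s m L T : ℕ} (ρ κ : Fin s → Fin (T + 1) → Fin (2 ^ (L * T)) → Fin m)
    (t : Fin s × Fin s → Fin (T + 2)) (a b : Fin s) :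
    (candidates ρ κ t a b).card ≤
      2 ^ (1 + L * (t (a, b)).val) * m ^ (if (t (a, b)).val = T + 1 then 1 else 0) := by
  unfold candidates
  have ht := (t (a, b)).2
  split_ifs with h1 h2 h2
  · omega
  · refine (Finset.card_union_le _ _).trans ?_
    have h3 := card_filter_val_lt_le (2 ^ (L * T)) (2 ^ (L * (t (a, b)).val))
    have h4 := Finset.card_image_le (s := Finset.univ.filter fun x : Fin (2 ^ (L * T)) =>
      x.val < 2 ^ (L * (t (a, b)).val)) (f := ρ a ⟨(t (a, b)).val, h1⟩)
    have h5 := Finset.card_image_le (s := Finset.univ.filter fun x : Fin (2 ^ (L * T)) =>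
      x.val < 2 ^ (L * (t (a, b)).val)) (f := κ b ⟨(t (a, b)).val, h1⟩)
    rw [pow_zero, mul_one, pow_add, pow_one]
    omega
  · rw [Finset.card_univ, Fintype.card_fin, pow_one]
    exact Nat.le_mul_of_pos_left _ (by positivity)
  · omega

/-- The level of a cell is the number of `i ≤ T` for which it is light at threshold `2 ^ (L i)`.
The levels have bounded average, and below level `T + 1` the colour of a cell is among the few
heavy colours of its row or column at that level. -/
lemma exists_candidates {s m L Q T : ℕ} (hs : 0 < s) (hm : 0 < m) (hL : L ≠ 0)
    (hT : 2 ^ (L * T) ≤ s) {ψ : Fin s → Fin s → Fin m} (hψ : SparseRepeats L Q ψ) :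
    ∃ (ρ κ : Fin s → Fin (T + 1) → Fin (2 ^ (L * T)) → Fin m) (t : Fin s × Fin s → Fin (T + 2)),
      ∑ e, (t e).val ≤ 2 * (Q * s ^ 2) ∧
      2 ^ T * (Finset.univ.filter fun e => (t e).val = T + 1).card ≤ Q * s ^ 2 ∧
      ∀ a b, ψ a b ∈ candidates ρ κ t a b := by
  have hpow : ∀ i ≤ T, 2 ^ (L * i) ≤ 2 ^ (L * T) := fun i hi =>
    Nat.pow_le_pow_right (by norm_num) (Nat.mul_le_mul_left _ hi)
  have hρ : ∀ (a : Fin s) (i : Fin (T + 1)), ∃ ρ : Fin (2 ^ (L * T)) → Fin m,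
      (Finset.univ.filter fun u => s < 2 ^ (L * i.val) *
        (Finset.univ.filter fun b => ψ a b = u).card) ⊆
      (Finset.univ.filter fun x : Fin (2 ^ (L * T)) => x.val < 2 ^ (L * i.val)).image ρ :=
    fun a i => exists_list_cover hm (hpow i.val (by omega)) _ (card_heavy_le (ψ a) hs)
  have hκ : ∀ (b : Fin s) (i : Fin (T + 1)), ∃ κ : Fin (2 ^ (L * T)) → Fin m,
      (Finset.univ.filter fun u => s < 2 ^ (L * i.val) *
        (Finset.univ.filter fun a => ψ a b = u).card) ⊆
      (Finset.univ.filter fun x : Fin (2 ^ (L * T)) => x.val < 2 ^ (L * i.val)).image κ :=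
    fun b i => exists_list_cover hm (hpow i.val (by omega)) _ (card_heavy_le (fun a => ψ a b) hs)
  choose ρ hρ using hρ
  choose κ hκ using hκ
  have hlt : ∀ e : Fin s × Fin s,
      ((Finset.range (T + 1)).filter fun i => e ∈ lightCells ψ (2 ^ (L * i))).card < T + 2 := by
    intro e
    have := Finset.card_filter_le (Finset.range (T + 1)) fun i => e ∈ lightCells ψ (2 ^ (L * i))
    rw [Finset.card_range] at this
    omega
  refine ⟨ρ, κ, fun e => ⟨_, hlt e⟩, ?_, ?_, ?_⟩
  · have h1 : ∑ e, ((Finset.range (T + 1)).filter fun i => e ∈ lightCells ψ (2 ^ (L * i))).card =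
        ∑ i ∈ Finset.range (T + 1), (lightCells ψ (2 ^ (L * i))).card := by
      simp only [Finset.card_filter]
      rw [Finset.sum_comm]
      simp
    simp only [h1]
    refine le_trans (Finset.sum_le_sum fun i hi => ?_)
      ((Nat.geom_sum_le le_rfl (Q * s ^ 2) (T + 1)).trans (by simp [mul_comm]))
    rw [Finset.mem_range] at hi
    rw [Nat.le_div_iff_mul_le (by positivity), mul_comm]
    exact card_lightCells_le hψ hL ((hpow i (by omega)).trans hT)
  · refine le_trans (Nat.mul_le_mul_left _ (Finset.card_le_card ?_)) (card_lightCells_le hψ hL hT)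
    intro e he
    have h1 : ((Finset.range (T + 1)).filter fun i => e ∈ lightCells ψ (2 ^ (L * i))).card = T + 1 :=
      (Finset.mem_filter.1 he).2
    have h2 := Finset.card_filter_eq_iff.1 (h1.trans (Finset.card_range _).symm)
    exact h2 T (Finset.mem_range.2 (by omega))
  · intro a b
    unfold candidates
    dsimp only
    set k := ((Finset.range (T + 1)).filter fun i => (a, b) ∈ lightCells ψ (2 ^ (L * i))).card
      with hk
    split_ifs with h1
    swap
    · exact Finset.mem_univ _
    have h2 : (a, b) ∉ lightCells ψ (2 ^ (L * k)) := by
      intro h3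
      have h4 : Finset.range (k + 1) ⊆
          (Finset.range (T + 1)).filter fun i => (a, b) ∈ lightCells ψ (2 ^ (L * i)) := by
        intro i hi
        rw [Finset.mem_range] at hi
        refine Finset.mem_filter.2 ⟨Finset.mem_range.2 (by omega), lightCells_anti ψ ?_ h3⟩
        exact Nat.pow_le_pow_right (by norm_num) (Nat.mul_le_mul_left _ (by omega))
      have h5 := Finset.card_le_card h4
      rw [Finset.card_range] at h5
      omega
    simp only [lightCells, Finset.mem_filter, Finset.mem_univ, true_and, not_and_or, not_le] at h2
    rcases h2 with h2 | h2
    · exact Finset.mem_union_left _ (hρ a ⟨k, h1⟩ (Finset.mem_filter.2 ⟨Finset.mem_univ _, h2⟩))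
    · exact Finset.mem_union_right _ (hκ b ⟨k, h1⟩ (Finset.mem_filter.2 ⟨Finset.mem_univ _, h2⟩))

/-- The number of colourings of the `s × s` grid with `O(s)` colours and sparse repeats is
`2 ^ O(s ^ 2)`. -/
lemma card_sparseRepeats_le (K L Q : ℕ) (hK : K ≠ 0) (hL : L ≠ 0) : ∃ C : ℕ, ∀ s : ℕ, 1 ≤ s →
    {ψ : Fin s → Fin s → Fin (K * s) | SparseRepeats L Q ψ}.ncard ≤ 2 ^ (C * s ^ 2) := by
  set q := K + 4 * L with hq
  refine ⟨2 * q + (2 * Q + 1) + (1 + L * (2 * Q) + q * Q), fun s hs => ?_⟩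
  classical
  set m := K * s with hm
  have hm0 : 0 < m := by positivity
  -- `T` is the largest integer with `2 ^ (4 L T) ≤ s`
  set T := Nat.log (2 ^ (4 * L)) s with hTdef
  have hb : 1 < 2 ^ (4 * L) := Nat.one_lt_two_pow (by omega)
  have hT1 : 2 ^ (4 * L * T) ≤ s := by rw [pow_mul]; exact Nat.pow_log_le_self _ (by omega)
  have hT2 : s < 2 ^ (4 * L * (T + 1)) := by rw [pow_mul]; exact Nat.lt_pow_succ_log_self hb s
  have hTs : 2 ^ (L * T) ≤ s := le_trans (Nat.pow_le_pow_right (by norm_num) (by nlinarith)) hT1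
  have hmq : m ≤ 2 ^ (q * (T + 1)) := by
    calc m ≤ 2 ^ K * 2 ^ (4 * L * (T + 1)) := Nat.mul_le_mul Nat.lt_two_pow_self.le hT2.le
      _ = 2 ^ (K + 4 * L * (T + 1)) := (pow_add _ _ _).symm
      _ ≤ 2 ^ (q * (T + 1)) := Nat.pow_le_pow_right (by norm_num) (by rw [hq]; nlinarith)
  have hTT : T + 1 ≤ 2 ^ T := Nat.lt_two_pow_self
  let Dat := Fin s → Fin (T + 1) → Fin (2 ^ (L * T)) → Fin m
  have hDat : Fintype.card (Dat × Dat) ≤ 2 ^ (2 * q * s ^ 2) := by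
    have h1 : Fintype.card Dat ≤ 2 ^ (q * s ^ 2) := by
      simp only [Dat, Fintype.card_fun, Fintype.card_fin]
      rw [← pow_mul, ← pow_mul]
      refine (Nat.pow_le_pow_left hmq _).trans ?_
      rw [← pow_mul]
      refine Nat.pow_le_pow_right (by norm_num) ?_
      have h2 : (T + 1) * (T + 1) * 2 ^ (L * T) ≤ s := by
        calc (T + 1) * (T + 1) * 2 ^ (L * T) ≤ 2 ^ T * 2 ^ T * 2 ^ (L * T) :=
              Nat.mul_le_mul_right _ (Nat.mul_le_mul hTT hTT)
          _ = 2 ^ (T + T + L * T) := by rw [pow_add, pow_add]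
          _ ≤ 2 ^ (4 * L * T) := Nat.pow_le_pow_right (by norm_num) (by
              have : T ≤ L * T := Nat.le_mul_of_pos_left _ (by omega)
              nlinarith)
          _ ≤ s := hT1
      calc q * (T + 1) * (2 ^ (L * T) * ((T + 1) * s))
          = q * ((T + 1) * (T + 1) * 2 ^ (L * T)) * s := by ring
        _ ≤ q * s * s := Nat.mul_le_mul_right _ (Nat.mul_le_mul_left _ h2)
        _ = q * s ^ 2 := by ring
    rw [Fintype.card_prod]
    calc _ ≤ 2 ^ (q * s ^ 2) * 2 ^ (q * s ^ 2) := Nat.mul_le_mul h1 h1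
      _ = _ := by rw [← pow_add]; congr 1; ring
  let Lev := Finset.univ.filter fun t : Fin s × Fin s → Fin (T + 2) =>
    ∑ e, (t e).val ≤ 2 * (Q * s ^ 2)
  have hLev : Lev.card ≤ 2 ^ ((2 * Q + 1) * s ^ 2) := by
    refine (card_levels_le T (2 * (Q * s ^ 2))).trans (le_of_eq ?_)
    simp only [Fintype.card_prod, Fintype.card_fin]
    congr 1; ring
  let Lev' := Lev.filter fun t =>
    2 ^ T * (Finset.univ.filter fun e => (t e).val = T + 1).card ≤ Q * s ^ 2
  let F : (Dat × Dat) × (Fin s × Fin s → Fin (T + 2)) → Finset (Fin s → Fin s → Fin m) := fun d =>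
    Fintype.piFinset fun a => Fintype.piFinset fun b => candidates d.1.1 d.1.2 d.2 a b
  have hF : ∀ d ∈ (Finset.univ : Finset (Dat × Dat)) ×ˢ Lev',
      (F d).card ≤ 2 ^ ((1 + L * (2 * Q) + q * Q) * s ^ 2) := by
    rintro ⟨⟨ρ, κ⟩, t⟩ hd
    have ht' := Finset.mem_filter.1 (Finset.mem_product.1 hd).2
    have ht1 : ∑ e, (t e).val ≤ 2 * (Q * s ^ 2) := (Finset.mem_filter.1 ht'.1).2
    have ht2 := ht'.2
    dsimp only at ht2
    simp only [F, Fintype.card_piFinset]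
    rw [← Fintype.prod_prod_type' (f := fun a b => (candidates ρ κ t a b).card)]
    refine (Finset.prod_le_prod' fun e _ => card_candidates_le ρ κ t e.1 e.2).trans ?_
    rw [Finset.prod_mul_distrib, Finset.prod_pow_eq_pow_sum, Finset.prod_pow_eq_pow_sum,
      Finset.sum_add_distrib, ← Finset.mul_sum, ← Finset.card_filter]
    have h3 : m ^ (Finset.univ.filter fun e : Fin s × Fin s => (t (e.1, e.2)).val = T + 1).card ≤
        2 ^ (q * (Q * s ^ 2)) := by
      refine (Nat.pow_le_pow_left hmq _).trans ?_
      rw [← pow_mul]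
      refine Nat.pow_le_pow_right (by norm_num) ?_
      rw [mul_assoc]
      exact Nat.mul_le_mul_left _ ((Nat.mul_le_mul_right _ hTT).trans ht2)
    have h4 : ∑ _e : Fin s × Fin s, 1 + L * ∑ e : Fin s × Fin s, (t (e.1, e.2)).val ≤
        s ^ 2 + L * (2 * (Q * s ^ 2)) := by
      refine Nat.add_le_add (le_of_eq ?_) (Nat.mul_le_mul_left _ ht1)
      simp [sq]
    calc _ ≤ 2 ^ (s ^ 2 + L * (2 * (Q * s ^ 2))) * 2 ^ (q * (Q * s ^ 2)) :=
          Nat.mul_le_mul (Nat.pow_le_pow_right (by norm_num) h4) h3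
      _ = _ := by rw [← pow_add]; congr 1; ring
  have hsub : {ψ : Fin s → Fin s → Fin m | SparseRepeats L Q ψ} ⊆
      (((Finset.univ : Finset (Dat × Dat)) ×ˢ Lev').biUnion F : Finset _) := by
    intro ψ hψ
    obtain ⟨ρ, κ, t, h1, h2, h3⟩ := exists_candidates (T := T) hs hm0 hL hTs hψ
    rw [Finset.mem_coe, Finset.mem_biUnion]
    refine ⟨((ρ, κ), t), ?_, ?_⟩
    · rw [Finset.mem_product]
      exact ⟨Finset.mem_univ _, Finset.mem_filter.2 ⟨Finset.mem_filter.2 ⟨Finset.mem_univ _, h1⟩,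
        h2⟩⟩
    · simp only [F, Fintype.mem_piFinset]
      exact h3
  refine (Set.ncard_le_ncard hsub (Finset.finite_toSet _)).trans ?_
  rw [Set.ncard_coe_finset]
  refine Finset.card_biUnion_le.trans ((Finset.sum_le_card_nsmul _ _ _ hF).trans ?_)
  rw [Finset.card_product, Finset.card_univ, smul_eq_mul]
  have hLev' : Lev'.card ≤ 2 ^ ((2 * Q + 1) * s ^ 2) := (Finset.card_filter_le _ _).trans hLev
  calc _ ≤ 2 ^ (2 * q * s ^ 2) * 2 ^ ((2 * Q + 1) * s ^ 2) *
        2 ^ ((1 + L * (2 * Q) + q * Q) * s ^ 2) :=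
        Nat.mul_le_mul_right _ (Nat.mul_le_mul hDat hLev')
    _ = _ := by rw [← pow_add, ← pow_add]; congr 1; ring

/-! ### Encoding coloured graphs -/

/-- Sparseness of repeats depends only on which cells share their colour. -/
lemma SparseRepeats.congr {L Q s : ℕ} {γ γ' : Type} [DecidableEq γ] [DecidableEq γ']
    {c : Fin s → Fin s → γ} {c' : Fin s → Fin s → γ'} (hc : SparseRepeats L Q c)
    (h : ∀ a b a' b', c a b = c a' b' ↔ c' a b = c' a' b') : SparseRepeats L Q c' := by
  intro j H h1 h2 hrow hcol
  refine hc j H h1 h2 ?_ ?_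
  · intro a u
    rcases Finset.eq_empty_or_nonempty (Finset.univ.filter fun b => (a, b) ∈ H ∧ c a b = u)
      with h0 | ⟨b₀, hb₀⟩
    · rw [h0]; simp
    · obtain ⟨_, rfl⟩ := (Finset.mem_filter.1 hb₀).2
      simp only [h]
      exact hrow a _
  · intro b u
    rcases Finset.eq_empty_or_nonempty (Finset.univ.filter fun a => (a, b) ∈ H ∧ c a b = u)
      with h0 | ⟨a₀, ha₀⟩
    · rw [h0]; simp
    · obtain ⟨_, rfl⟩ := (Finset.mem_filter.1 ha₀).2
      simp only [h]
      exact hcol b _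

open Classical in
/-- The coloured graph described by enumerations `α`, `β` of its parts, a list `z` of its colours
and the colour indices `ψ`, packed as `d = ((α, β), (z, ψ))`. For non-disjoint or non-injective
enumerations the preimage of an edge is an arbitrary choice. -/
noncomputable def decode {n s m : ℕ} (d : ((Fin s → Fin (n + 1)) × (Fin s → Fin (n + 1))) ×
    ((Fin m → Fin (n + 1)) × (Fin s → Fin s → Fin m))) : Finset (Finset ℕ) × (Finset ℕ → ℕ) :=
  (completeBipartiteEdges (Finset.univ.image fun a => (d.1.1 a).val)
      (Finset.univ.image fun b => (d.1.2 b).val),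
    fun e => if h : ∃ q : Fin s × Fin s, e = {(d.1.1 q.1).val, (d.1.2 q.2).val} then
      (d.2.1 (d.2.2 h.choose.1 h.choose.2)).val else 0)

lemma exists_enum {n s : ℕ} {A : Finset ℕ} (hA : A ⊆ Finset.Icc 1 n) (hs : A.card = s) :
    ∃ α : Fin s → Fin (n + 1), Function.Injective (fun a => (α a).val) ∧
      (Finset.univ.image fun a => (α a).val) = A := by
  let e := A.equivFinOfCardEq hs
  have hlt : ∀ a, (e.symm a).1 < n + 1 := fun a => by
    have := Finset.mem_Icc.1 (hA (e.symm a).2); omega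
  refine ⟨fun a => ⟨(e.symm a).1, hlt a⟩, ?_, ?_⟩
  · exact Subtype.val_injective.comp e.symm.injective
  · ext x
    simp only [Finset.mem_image, Finset.mem_univ, true_and]
    constructor
    · rintro ⟨a, rfl⟩; exact (e.symm a).2
    · intro hx; exact ⟨e ⟨x, hx⟩, by simp⟩

/-- Every colouring to be counted is `decode d` for some `d` with sparse repeats; the colour indices
come from a section of `z`, so that equal colours get equal indices. -/
lemma exists_decode {n s l : ℕ} (hl : 2 ≤ l) (hs : 1 ≤ s) {A B : Finset ℕ} {χ : Finset ℕ → ℕ}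
    (hA : A ⊆ Finset.Icc 1 n) (hB : B ⊆ Finset.Icc 1 n) (hAB : Disjoint A B) (hAs : A.card = s)
    (hBs : B.card = s)
    (hχ : ∀ e ∈ completeBipartiteEdges A B, χ e ∈ Finset.Icc 1 n ∧ χ e ∉ e)
    (hχ0 : ∀ e ∉ completeBipartiteEdges A B, χ e = 0)
    (hno : ¬ HasLooseCycle (2 * l) (Extension (completeBipartiteEdges A B) χ)) :
    ∃ d : ((Fin s → Fin (n + 1)) × (Fin s → Fin (n + 1))) × ((Fin
      ((4 * (broomSet (2 * (l - 1) + 1) (l - 1)).card + 1) * 2 * s) → Fin (n + 1)) ×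
      (Fin s → Fin s → Fin ((4 * (broomSet (2 * (l - 1) + 1) (l - 1)).card + 1) * 2 * s))),
      SparseRepeats (l * l) (6 * l ^ 4) d.2.2 ∧ decode d = (completeBipartiteEdges A B, χ) := by
  have hχ' : ∀ x y, BAdj A B x y → χ {x, y} ≠ x ∧ χ {x, y} ≠ y := by
    intro x y hxy
    have := (hχ _ (mem_completeBipartiteEdges hxy)).2
    simp only [Finset.mem_insert, Finset.mem_singleton, not_or] at this
    exact this
  obtain ⟨α, hαi, hαA⟩ := exists_enum hA hAs
  obtain ⟨β, hβi, hβB⟩ := exists_enum hB hBs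
  have hαm : ∀ a, (α a).val ∈ A := fun a => by
    rw [← hαA]; exact Finset.mem_image_of_mem _ (Finset.mem_univ a)
  have hβm : ∀ b, (β b).val ∈ B := fun b => by
    rw [← hβB]; exact Finset.mem_image_of_mem _ (Finset.mem_univ b)
  have hsp := sparseRepeats_of_no_cycle hl hAB hχ' (fun a => (α a).val) (fun b => (β b).val)
    hαi hβi hαm hβm hno
  have hcard := card_colours_le (h := l - 1) (by omega) hAB hχ'
    (by rw [show 2 * (l - 1) + 2 = 2 * l by omega]; exact hno)
  rw [hAs, hBs, ← two_mul, ← mul_assoc] at hcard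
  set m := (4 * (broomSet (2 * (l - 1) + 1) (l - 1)).card + 1) * 2 * s with hm
  set Z := (completeBipartiteEdges A B).image χ with hZ
  have hmem : ∀ a b, ({(α a).val, (β b).val} : Finset ℕ) ∈ completeBipartiteEdges A B :=
    fun a b => mem_completeBipartiteEdges (Or.inl ⟨hαm a, hβm b⟩)
  have hm0 : 0 < m := by positivity
  obtain ⟨z, hz⟩ := exists_list_cover (m := n + 1) (N := m) (N' := m) (by omega) le_rfl
    (Finset.univ.filter fun u : Fin (n + 1) => u.val ∈ Z) (by
      refine le_trans ?_ hcard
      rw [← Finset.card_image_of_injective _ Fin.val_injective]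
      refine Finset.card_le_card fun x hx => ?_
      obtain ⟨u, hu, rfl⟩ := Finset.mem_image.1 hx
      exact (Finset.mem_filter.1 hu).2)
  have hz' : ∀ c : ℕ, ∃ i : Fin m, c ∈ Z → (z i).val = c := by
    intro c
    by_cases hc : c ∈ Z
    · have hcn : c < n + 1 := by
        obtain ⟨e, he, rfl⟩ := Finset.mem_image.1 hc
        have := Finset.mem_Icc.1 (hχ e he).1
        omega
      obtain ⟨i, _, hi⟩ := Finset.mem_image.1
        (hz (Finset.mem_filter.2 ⟨Finset.mem_univ (⟨c, hcn⟩ : Fin (n + 1)), hc⟩))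
      exact ⟨i, fun _ => by rw [hi]⟩
    · exact ⟨⟨0, hm0⟩, fun h => absurd h hc⟩
  choose g hg using hz'
  have hcZ : ∀ a b, χ {(α a).val, (β b).val} ∈ Z := fun a b =>
    Finset.mem_image_of_mem _ (hmem a b)
  refine ⟨((α, β), (z, fun a b => g (χ {(α a).val, (β b).val}))), ?_, ?_⟩
  · refine hsp.congr fun a b a' b' => ⟨fun h => congrArg g h, fun h => ?_⟩
    have h2 := congrArg (fun i => (z i).val) h
    simp only [hg _ (hcZ _ _)] at h2
    exact h2
  · unfold decode
    refine Prod.ext ?_ ?_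
    · simp only [hαA, hβB]
    · funext e
      dsimp only
      split_ifs with h
      · rw [hg _ (hcZ _ _)]
        exact congrArg χ h.choose_spec.symm
      · refine (hχ0 e fun he => h ?_).symm
        obtain ⟨⟨x, y⟩, hxy, rfl⟩ := Finset.mem_image.1 he
        obtain ⟨hx, hy⟩ := Finset.mem_product.1 hxy
        rw [← hαA] at hx
        rw [← hβB] at hy
        obtain ⟨a, _, rfl⟩ := Finset.mem_image.1 hx
        obtain ⟨b, _, rfl⟩ := Finset.mem_image.1 hy
        exact ⟨(a, b), rfl⟩

/-- Rewriting the count `(n + 1) ^ O(s) * 2 ^ O(s ^ 2)` in exponential form. -/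
lemma count_le_two_rpow {n s K C : ℕ} (hn : 2 ≤ n) :
    ((((n + 1) ^ s * (n + 1) ^ s) * ((n + 1) ^ (K * s) * 2 ^ (C * s ^ 2)) : ℕ) : ℝ) ≤
      (2 : ℝ) ^ (((4 + 2 * K + C : ℕ) : ℝ) * ((s : ℝ) * Real.logb 2 n + (s : ℝ) ^ 2)) := by
  have hn0 : (0 : ℝ) < n := by positivity
  have hlog : 0 ≤ Real.logb 2 n := Real.logb_nonneg (by norm_num) (by exact_mod_cast by omega)
  have h1 : ((n + 1) ^ s * (n + 1) ^ s) * ((n + 1) ^ (K * s) * 2 ^ (C * s ^ 2)) ≤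
      n ^ ((4 + 2 * K) * s) * 2 ^ (C * s ^ 2) := by
    rw [← mul_assoc, ← pow_add, ← pow_add]
    refine Nat.mul_le_mul_right _ ?_
    calc (n + 1) ^ (s + s + K * s) ≤ (n ^ 2) ^ (s + s + K * s) :=
          Nat.pow_le_pow_left (by nlinarith) _
      _ = n ^ ((4 + 2 * K) * s) := by rw [← pow_mul]; congr 1; ring
  have h2 : ((n ^ ((4 + 2 * K) * s) * 2 ^ (C * s ^ 2) : ℕ) : ℝ) =
      (2 : ℝ) ^ (Real.logb 2 n * (((4 + 2 * K) * s : ℕ) : ℝ) + ((C * s ^ 2 : ℕ) : ℝ)) := by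
    rw [Real.rpow_add (by norm_num), Real.rpow_mul (by norm_num),
      Real.rpow_logb (by norm_num) (by norm_num) hn0, Real.rpow_natCast, Real.rpow_natCast]
    push_cast
    rfl
  refine (Nat.cast_le.2 h1).trans (h2.le.trans ?_)
  refine Real.rpow_le_rpow_of_exponent_le (by norm_num) ?_
  push_cast
  have h3 : (0 : ℝ) ≤ C * (s * Real.logb 2 n) := by positivity
  have h4 : (0 : ℝ) ≤ (4 + 2 * K) * (s : ℝ) ^ 2 := by positivity
  nlinarith

/-- For every even `k ≥ 4` there is `C > 0` such that for all `n ≥ 2` and `s ≥ 1`, the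
number of edge-colored complete bipartite graphs `K_{s,s}` with vertex set in `[n]` whose
extension is `C_k`-free is at most `2^(C·(s·log₂ n + s²))`. -/
theorem count_colored_Kss (k : ℕ) (hk : 4 ≤ k) (hke : Even k) :
    ∃ C : ℝ, 0 < C ∧ ∀ n s : ℕ, 2 ≤ n → 1 ≤ s →
      (({p : Finset (Finset ℕ) × (Finset ℕ → ℕ) |
          (∃ A B : Finset ℕ, A ⊆ Finset.Icc 1 n ∧ B ⊆ Finset.Icc 1 n ∧ Disjoint A B ∧
            A.card = s ∧ B.card = s ∧ p.1 = completeBipartiteEdges A B) ∧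
          (∀ e ∈ p.1, p.2 e ∈ Finset.Icc 1 n ∧ p.2 e ∉ e) ∧
          (∀ e ∉ p.1, p.2 e = 0) ∧
          ¬ HasLooseCycle k (Extension p.1 p.2)} : Set _).ncard : ℝ)
        ≤ (2 : ℝ) ^ (C * ((s : ℝ) * Real.logb 2 n + (s : ℝ) ^ 2)) := by
  obtain ⟨l, rfl⟩ := hke
  have hl : 2 ≤ l := by omega
  set K := (4 * (broomSet (2 * (l - 1) + 1) (l - 1)).card + 1) * 2 with hK
  obtain ⟨C, hC⟩ := card_sparseRepeats_le K (l * l) (6 * l ^ 4) (by omega) (by positivity)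
  refine ⟨((4 + 2 * K + C : ℕ) : ℝ), by positivity, fun n s hn hs => ?_⟩
  refine le_trans (Nat.cast_le.2 ?_) (count_le_two_rpow (K := K) (C := C) hn)
  set Ψ := {ψ : Fin s → Fin s → Fin (K * s) | SparseRepeats (l * l) (6 * l ^ 4) ψ} with hΨ
  refine (Set.ncard_le_ncard (t := decode '' ((Set.univ : Set ((Fin s → Fin (n + 1)) ×
    (Fin s → Fin (n + 1)))) ×ˢ ((Set.univ : Set (Fin (K * s) → Fin (n + 1))) ×ˢ Ψ))) ?_
    ((Set.toFinite _).image _)).trans ?_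
  · rintro ⟨G, χ⟩ ⟨⟨A, B, hA, hB, hAB, hAs, hBs, hG⟩, hχ, hχ0, hno⟩
    dsimp only at hG hχ hχ0 hno
    subst hG
    rw [← two_mul] at hno
    obtain ⟨d, hd, hd2⟩ := exists_decode hl hs hA hB hAB hAs hBs hχ hχ0 hno
    exact ⟨d, ⟨Set.mem_univ _, Set.mem_univ _, hd⟩, hd2⟩
  · refine (Set.ncard_image_le (Set.toFinite _)).trans ?_
    rw [Set.ncard_prod, Set.ncard_prod, Set.ncard_univ, Set.ncard_univ]
    simp only [Nat.card_eq_fintype_card, Fintype.card_prod, Fintype.card_fun, Fintype.card_fin]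
    exact Nat.mul_le_mul_left _ (Nat.mul_le_mul_left _ (hC s hs))
end

section
/- For all integers n ≥ r ≥ 2 there exists a constant c = c(r) > 0 such that every r-uniform hypergraph H on n vertices can be partitioned into edge-disjoint balanced complete r-partite r-graphs K_{s_1:r},…,K_{s_m:r} (each a subgraph of H, together covering every edge of H exactly once) with s_i ≤ (log n)^{1/(r−1)} for every i and Σ_{i=1}^m s_i^{r−1} ≤ c·n^r/(log n)^{1/(r−1)}. -/
/-!
Large balanced complete `r`-partite subgraphs are removed greedily from `H`. Write
`r = m + 1`, `L = log₂ n` and `X = L ^ (1 / m)`.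

The main point (`exists_large_completeMultipartite`) is that a nonempty `r`-graph of ordered
density at least `δ = |H| / n ^ r` contains a copy of `K_{s:r}` with
`X √δ / (16 r) ≤ s ≤ X`. The factor `√δ` is a crude replacement for the sharper
`(log (1 / δ)) ^ (-1 / m)`: it is small enough that `s ^ m * log (1 / δ) = O(L)`, and large enough
for the greedy count below. To find the copy, choose `x : Fin m → Fin s → V` at random. By convexity
(`expect_pow_le_expect_prod`), the expected proportion of vertices `v` such that every
`(v, x 0 (φ 0), …, x (m - 1) (φ (m - 1)))` is an edge is at least `δ ^ (s ^ m)`. At most a fraction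
`m s ^ 2 / n` of the `x` have a repeated vertex inside a part, so if `n δ ^ (s ^ m) ≥ (m + 1) s ^ 2`
some `x` has injective rows and at least `s` such vertices `v`; these form the last part. Distinct
parts are automatically disjoint, as edges have exactly `r` vertices.

For the cost (`exists_decomposition_of_exists_large`), removing a copy with `s ≥ B √e` from a
hypergraph with `e` edges costs `s ^ m = s ^ r / s ≤ s ^ r / (B √e)`, which is at most the drop of
the potential `(2 / B) √e` when `e` decreases by `s ^ r`. Hence the total cost is at most
`(2 / B) √|H|`; with `B = X / (16 r √(n ^ r))` and `|H| ≤ n ^ r` this is at most `32 r n ^ r / X`.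
-/

/-- The edge set of the complete `m`-partite `m`-graph with parts `P 0, …, P (m-1)`:
all `m`-element subsets of the union of the parts meeting each part in exactly one
vertex. -/
def completeMultipartiteEdges (m : ℕ) (P : Fin m → Finset ℕ) : Finset (Finset ℕ) :=
  ((Finset.univ.biUnion P).powersetCard m).filter fun T => ∀ i, (T ∩ P i).card = 1

section

open Finset
open scoped BigOperators

/-! ### Convexity and counting of tuples -/

theorem expect_pow_le {ι : Type*} [Fintype ι] [Nonempty ι] (f : ι → ℝ) (hf : ∀ i, 0 ≤ f i)
    (k : ℕ) : (𝔼 i, f i) ^ k ≤ 𝔼 i, f i ^ k := by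
  have h := Real.pow_arith_mean_le_arith_mean_pow univ (fun _ => (1 : ℝ) / Fintype.card ι) f
    (fun _ _ => by positivity) (by simp) (fun i _ => hf i) k
  simpa only [Fintype.expect_eq_sum_div_card, div_eq_inv_mul, mul_one, ← mul_sum] using h

theorem expect_fin_cons {α : Type*} [Fintype α] {m : ℕ} (f : (Fin (m + 1) → α) → ℝ) :
    𝔼 x, f x = 𝔼 a, 𝔼 y, f (Fin.cons a y) := by
  rw [← expect_product' univ univ (fun a (y : Fin m → α) => f (Fin.cons a y)), univ_product_univ]
  exact (Fintype.expect_equiv (Fin.consEquiv fun _ => α) _ _ fun _ => rfl).symm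

theorem prod_fin_cons {α : Type*} [Fintype α] {m : ℕ} (f : (Fin (m + 1) → α) → ℝ) :
    ∏ x, f x = ∏ y, ∏ a, f (Fin.cons a y) := by
  rw [Finset.prod_comm, ← Finset.prod_product', Finset.univ_product_univ]
  exact (Fintype.prod_equiv (Fin.consEquiv fun _ => α) _ _ fun _ => rfl).symm

/-- Counting inequality for the complete `m`-partite `m`-graph with parts of size `s`: its
homomorphism density in a weighted directed `m`-graph `f` is at least the edge density of `f` to
the power of the number `s ^ m` of edges. -/
theorem expect_pow_le_expect_prod {V : Type*} [Fintype V] [Nonempty V] (s m : ℕ)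
    (f : (Fin m → V) → ℝ) (hf : ∀ x, 0 ≤ f x) :
    (𝔼 x, f x) ^ s ^ m ≤
      𝔼 x : Fin m → Fin s → V, ∏ φ : Fin m → Fin s, f fun i => x i (φ i) := by
  induction m with
  | zero =>
    apply le_of_eq
    simp only [pow_zero, pow_one, univ_unique, prod_singleton, expect_singleton]
    congr 1
    ext i; exact i.elim0
  | succ m ih =>
    let g : (Fin s → V) → (Fin m → V) → ℝ := fun a y => ∏ j, f (Fin.cons (a j) y)
    have hg : ∀ a y, 0 ≤ g a y := fun a y => prod_nonneg fun _ _ => hf _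
    calc (𝔼 x, f x) ^ s ^ (m + 1) = ((𝔼 y, 𝔼 a, f (Fin.cons a y)) ^ s) ^ s ^ m := by
          rw [expect_fin_cons, expect_comm, ← pow_mul, pow_succ']
      _ ≤ (𝔼 y, (𝔼 a, f (Fin.cons a y)) ^ s) ^ s ^ m := by
          gcongr
          · exact pow_nonneg (expect_nonneg fun _ _ => expect_nonneg fun _ _ => hf _) _
          · exact expect_pow_le _ (fun _ => expect_nonneg fun _ _ => hf _) s
      _ = (𝔼 a, 𝔼 y, g a y) ^ s ^ m := by
          rw [expect_comm]
          simp only [expect_pow, Fintype.piFinset_univ, g]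
      _ ≤ 𝔼 a, (𝔼 y, g a y) ^ s ^ m :=
          expect_pow_le _ (fun _ => expect_nonneg fun _ _ => hg _ _) _
      _ ≤ 𝔼 a, 𝔼 x : Fin m → Fin s → V, ∏ φ : Fin m → Fin s, g a fun i => x i (φ i) :=
          expect_le_expect fun a _ => ih _ (hg a)
      _ = _ := by
          rw [expect_fin_cons]
          refine expect_congr rfl fun a _ => expect_congr rfl fun x _ => ?_
          rw [prod_fin_cons]
          refine prod_congr rfl fun φ _ => prod_congr rfl fun j _ => ?_
          congr 1
          ext i
          refine Fin.cases ?_ (fun i => ?_) i <;> simp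

/-- The probability that one of `m` random `s`-tuples of vertices has a repeated entry. -/
theorem expect_not_injective_le {V : Type*} [Fintype V] [DecidableEq V] [Nonempty V] (s m : ℕ) :
    (𝔼 x : Fin m → Fin s → V, if ∀ i, Function.Injective (x i) then (0 : ℝ) else 1) ≤
      m * s ^ 2 / Fintype.card V := by
  have key : ∀ (i : Fin m) (a b : Fin s), a ≠ b →
      (𝔼 x : Fin m → Fin s → V, if x i a = x i b then (1 : ℝ) else 0) ≤ 1 / Fintype.card V := by
    intro i a b hab
    -- Overwriting `x i a` by an arbitrary vertex is injective on pairs, as the old value is `x i b`.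
    have hcard : #{x : Fin m → Fin s → V | x i a = x i b} * Fintype.card V ≤
        Fintype.card (Fin m → Fin s → V) := by
      rw [← card_univ (α := V), ← card_product, ← card_univ]
      refine card_le_card_of_injOn
        (fun p => Function.update p.1 i (Function.update (p.1 i) a p.2))
        (fun _ _ => by simp) ?_
      rintro ⟨x, v⟩ hx ⟨y, w⟩ hy h
      simp only [coe_product, Set.mem_prod, mem_coe, mem_filter, mem_univ, true_and,
        and_true] at hx hy
      dsimp only at h
      have hi := congrFun h i
      simp only [Function.update_self] at hi
      have hvw : v = w := by simpa using congrFun hi a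
      have hoff : ∀ j, j ≠ a → x i j = y i j := fun j hj => by simpa [hj] using congrFun hi j
      have hxy : x = y := by
        ext j k
        by_cases hj : j = i
        · subst hj
          by_cases hk : k = a
          · subst hk; rw [hx, hy, hoff b hab.symm]
          · exact hoff k hk
        · simpa [hj] using congrFun (congrFun h j) k
      rw [hvw, hxy]
    rw [Fintype.expect_eq_sum_div_card, sum_boole, div_le_div_iff₀ (by positivity) (by positivity),
      one_mul]
    exact_mod_cast hcard
  calc _ ≤ 𝔼 x : Fin m → Fin s → V, ∑ i : Fin m, ∑ a : Fin s, ∑ b : Fin s,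
          (if a = b then 0 else if x i a = x i b then (1 : ℝ) else 0) := by
        refine expect_le_expect fun x _ => ?_
        have hnn : ∀ i a b, (0 : ℝ) ≤ if a = b then 0 else if x i a = x i b then (1 : ℝ) else 0 :=
          fun i a b => by split_ifs <;> norm_num
        split_ifs with h
        · exact sum_nonneg fun i _ => sum_nonneg fun a _ => sum_nonneg fun b _ => hnn i a b
        · simp only [Function.Injective, not_forall] at h
          obtain ⟨i, a, b, h1, h2⟩ := h
          calc (1 : ℝ) = if a = b then 0 else if x i a = x i b then (1 : ℝ) else 0 := by simp [h1, h2]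
            _ ≤ _ := single_le_sum (fun b _ => hnn i a b) (mem_univ b)
            _ ≤ _ := single_le_sum (fun a _ => sum_nonneg fun b _ => hnn i a b) (mem_univ a)
            _ ≤ _ := single_le_sum (fun i _ => sum_nonneg fun a _ => sum_nonneg fun b _ => hnn i a b) (mem_univ i)
    _ = ∑ i : Fin m, ∑ a : Fin s, ∑ b : Fin s, 𝔼 x : Fin m → Fin s → V,
          (if a = b then 0 else if x i a = x i b then (1 : ℝ) else 0) := by
        simp only [expect_sum_comm]
    _ ≤ ∑ i : Fin m, ∑ a : Fin s, ∑ b : Fin s, (1 : ℝ) / Fintype.card V := by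
        gcongr with i _ a _ b _
        by_cases hab : a = b
        · simp [hab]
        · simpa [hab] using key i a b hab
    _ = _ := by simp; ring

/-- In a dense ordered `(m + 1)`-graph `E` there are `m` injective `s`-tuples with at least `s`
vertices `v` such that each choice of one entry from every tuple is completed to an edge by `v`. -/
theorem exists_injective_tuple {V : Type*} [Fintype V] [DecidableEq V] [Nonempty V] (s m : ℕ)
    (hs : 1 ≤ s) (E : (Fin (m + 1) → V) → Prop) [DecidablePred E]
    (h : ((m : ℝ) + 1) * s ^ 2 ≤
      Fintype.card V * (𝔼 x, if E x then (1 : ℝ) else 0) ^ s ^ m) :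
    ∃ x : Fin m → Fin s → V, (∀ i, Function.Injective (x i)) ∧
      s ≤ #{v | ∀ φ : Fin m → Fin s, E (Fin.cons v fun i => x i (φ i))} := by
  by_contra! hcon
  set n := Fintype.card V
  have hn : (0 : ℝ) < n := by positivity
  have h1 : (𝔼 x, if E x then (1 : ℝ) else 0) ^ s ^ m ≤ 𝔼 x : Fin m → Fin s → V, 𝔼 v,
      if ∀ φ : Fin m → Fin s, E (Fin.cons v fun i => x i (φ i)) then (1 : ℝ) else 0 := by
    have hf : ∀ x, (0 : ℝ) ≤ if E x then (1 : ℝ) else 0 := fun x => by split_ifs <;> norm_num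
    rw [expect_fin_cons, expect_comm (univ : Finset (Fin m → Fin s → V))]
    refine (expect_pow_le (fun v : V => 𝔼 y, if E (Fin.cons v y) then (1 : ℝ) else 0)
      (fun _ => expect_nonneg fun _ _ => hf _) _).trans ?_
    refine expect_le_expect fun v _ => ?_
    refine (expect_pow_le_expect_prod s m (fun y => if E (Fin.cons v y) then (1 : ℝ) else 0)
      (fun _ => hf _)).trans_eq ?_
    refine expect_congr rfl fun x _ => ?_
    rw [Fintype.prod_boole]
  have h2 : (𝔼 x : Fin m → Fin s → V, 𝔼 v,
      if ∀ φ : Fin m → Fin s, E (Fin.cons v fun i => x i (φ i)) then (1 : ℝ) else 0) ≤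
      𝔼 x : Fin m → Fin s → V, (((s : ℝ) - 1) / n +
        if ∀ i, Function.Injective (x i) then (0 : ℝ) else 1) := by
    refine expect_le_expect fun x _ => ?_
    have hs' : (0 : ℝ) ≤ ((s : ℝ) - 1) / n := by
      have : (1 : ℝ) ≤ s := by exact_mod_cast hs
      exact div_nonneg (by linarith) hn.le
    split_ifs with hx
    · rw [Fintype.expect_eq_sum_div_card, sum_boole, add_zero]
      gcongr
      have := hcon x hx
      have : ((#{v | ∀ φ : Fin m → Fin s, E (Fin.cons v fun i => x i (φ i))} : ℕ) : ℝ) + 1 ≤ s := by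
        exact_mod_cast this
      linarith
    · refine (expect_le (a := (1 : ℝ)) univ_nonempty fun v _ => ?_).trans (by linarith)
      split_ifs <;> norm_num
  rw [expect_add_distrib, Fintype.expect_const] at h2
  have h3 := expect_not_injective_le (V := V) s m
  have h4 : (𝔼 x, if E x then (1 : ℝ) else 0) ^ s ^ m ≤ ((s : ℝ) - 1) / n + m * s ^ 2 / n :=
    by linarith
  rw [← add_div, le_div_iff₀ hn] at h4
  have hs1 : (1 : ℝ) ≤ s := by exact_mod_cast hs
  nlinarith

/-! ### Transversals of complete multipartite hypergraphs -/

theorem image_inter_part {r : ℕ} {P : Fin r → Finset ℕ} (hP : ∀ i j, i ≠ j → Disjoint (P i) (P j))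
    {t : Fin r → ℕ} (ht : ∀ i, t i ∈ P i) (i : Fin r) : univ.image t ∩ P i = {t i} := by
  ext v
  simp only [mem_inter, mem_image, mem_univ, true_and, mem_singleton]
  constructor
  · rintro ⟨⟨j, rfl⟩, hv⟩
    by_contra hne
    have hij : j ≠ i := fun h => hne (by rw [h])
    exact disjoint_left.1 (hP j i hij) (ht j) hv
  · rintro rfl
    exact ⟨⟨i, rfl⟩, ht i⟩

theorem card_image_transversal {r : ℕ} {P : Fin r → Finset ℕ}
    (hP : ∀ i j, i ≠ j → Disjoint (P i) (P j))
    {t : Fin r → ℕ} (ht : ∀ i, t i ∈ P i) : #(univ.image t) = r := by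
  rw [card_image_of_injective, card_univ, Fintype.card_fin]
  intro i j hij
  by_contra hne
  exact disjoint_left.1 (hP i j hne) (ht i) (hij ▸ ht j)

theorem completeMultipartiteEdges_eq_image {r : ℕ} {P : Fin r → Finset ℕ}
    (hP : ∀ i j, i ≠ j → Disjoint (P i) (P j)) :
    completeMultipartiteEdges r P = (Fintype.piFinset P).image fun t => univ.image t := by
  ext T
  simp only [completeMultipartiteEdges, mem_filter, mem_powersetCard, mem_image,
    Fintype.mem_piFinset]
  constructor
  · rintro ⟨⟨-, hcard⟩, hT⟩
    choose t ht using fun i => card_eq_one.1 (hT i)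
    have htm : ∀ i, t i ∈ T ∩ P i := fun i => by rw [ht i]; exact mem_singleton_self _
    have htP : ∀ i, t i ∈ P i := fun i => (mem_inter.1 (htm i)).2
    refine ⟨t, htP, eq_of_subset_of_card_le ?_ ?_⟩
    · exact image_subset_iff.2 fun i _ => (mem_inter.1 (htm i)).1
    · rw [card_image_transversal hP htP, hcard]
  · rintro ⟨t, ht, rfl⟩
    refine ⟨⟨?_, card_image_transversal hP ht⟩, fun i => ?_⟩
    · exact image_subset_iff.2 fun i _ => mem_biUnion.2 ⟨i, mem_univ _, ht i⟩
    · rw [image_inter_part hP ht, card_singleton]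

theorem card_completeMultipartiteEdges {r s : ℕ} {P : Fin r → Finset ℕ}
    (hP : ∀ i j, i ≠ j → Disjoint (P i) (P j)) (hs : ∀ i, #(P i) = s) :
    #(completeMultipartiteEdges r P) = s ^ r := by
  rw [completeMultipartiteEdges_eq_image hP, card_image_of_injOn]
  · simp [hs]
  · intro t ht u hu htu
    rw [mem_coe, Fintype.mem_piFinset] at ht hu
    ext i
    have h := image_inter_part hP ht i
    dsimp only at htu
    rw [htu, image_inter_part hP hu i] at h
    exact (singleton_injective h).symm

/-- If all transversals of nonempty parts are edges of an `r`-graph, then the parts are disjoint: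
a vertex common to two parts would yield a transversal with fewer than `r` vertices. -/
theorem parts_disjoint {r : ℕ} {P : Fin r → Finset ℕ} {H : Finset (Finset ℕ)}
    (hH : ∀ T ∈ H, #T = r) (hne : ∀ i, (P i).Nonempty)
    (hPH : ∀ t : Fin r → ℕ, (∀ i, t i ∈ P i) → univ.image t ∈ H) (i j : Fin r) (hij : i ≠ j) :
    Disjoint (P i) (P j) := by
  rw [disjoint_left]
  intro v hvi hvj
  choose u hu using hne
  let t : Fin r → ℕ := fun k => if k = i ∨ k = j then v else u k
  have hcard := hH _ (hPH t fun k => by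
    by_cases h1 : k = i
    · subst h1; simpa [t] using hvi
    · by_cases h2 : k = j
      · subst h2; simpa [t] using hvj
      · simpa [t, h1, h2] using hu k)
  have hinj : Function.Injective t := by
    rw [← Set.injOn_univ, ← coe_univ, ← card_image_iff, hcard, card_univ, Fintype.card_fin]
  exact hij (hinj (by simp [t]))

theorem card_le_card_ordered_edges {n r : ℕ} {H : Finset (Finset ℕ)} (hH : H ⊆ (Icc 1 n).powersetCard r)
    [DecidablePred fun x : Fin r → Icc 1 n => univ.image (fun i => (x i : ℕ)) ∈ H] :
    #H ≤ #{x : Fin r → Icc 1 n | univ.image (fun i => (x i : ℕ)) ∈ H} := by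
  refine card_le_card_of_surjOn (fun x => univ.image (fun i => (x i : ℕ))) ?_
  intro T hT
  obtain ⟨hTn, hTr⟩ := mem_powersetCard.1 (hH hT)
  let e := T.orderIsoOfFin hTr
  have : univ.image (fun i => (e i : ℕ)) = T := by
    ext v
    simp only [mem_image, mem_univ, true_and]
    constructor
    · rintro ⟨i, rfl⟩; exact (e i).2
    · intro hv; exact ⟨e.symm ⟨v, hv⟩, by simp⟩
  refine ⟨fun i => ⟨e i, hTn (e i).2⟩, ?_, this⟩
  simp only [coe_filter, mem_univ, true_and, Set.mem_ofPred_eq]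
  rw [this]
  exact hT

/-! ### Large complete multipartite subgraphs -/

/-- The numerical condition under which `exists_injective_tuple` applies: the left side is at most
`√n` since `s = O(log n)`, the right side is at least `√n` since `√δ * log (1 / δ)` is bounded. -/
theorem numeric_bound {m n s : ℕ} {δ : ℝ} (hm : 1 ≤ m) (hn : 2 ≤ n) (hs : 1 ≤ s) (hδ : 0 < δ)
    (hδ1 : δ ≤ 1) (h : (s : ℝ) ^ m ≤ Real.logb 2 n * √δ / (8 * (m + 1))) :
    ((m : ℝ) + 1) * s ^ 2 ≤ n * δ ^ s ^ m := by
  have hn0 : (0 : ℝ) < n := by positivity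
  have hm' : (1 : ℝ) ≤ m := by exact_mod_cast hm
  have hln : 0 < Real.log n := Real.log_pos (by exact_mod_cast hn)
  have hL : Real.logb 2 n ≤ 2 * Real.log n := by
    rw [Real.logb, div_le_iff₀ (Real.log_pos (by norm_num))]
    nlinarith [Real.log_two_gt_d9]
  have hL0 : 0 < Real.logb 2 n := Real.logb_pos (by norm_num) (by exact_mod_cast hn)
  have hsq : 0 < √δ := Real.sqrt_pos.2 hδ
  have hsq1 : √δ ≤ 1 := Real.sqrt_le_one.2 hδ1
  have hlogδ : -Real.log δ * √δ ≤ 2 := by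
    have h1 : Real.log (√δ)⁻¹ ≤ (√δ)⁻¹ := Real.log_le_self (by positivity)
    rw [Real.log_inv, Real.log_sqrt hδ.le] at h1
    have h2 := mul_le_mul_of_nonneg_right h1 hsq.le
    rw [inv_mul_cancel₀ hsq.ne'] at h2
    linarith
  have hrhs : √n ≤ n * δ ^ s ^ m := by
    have h1 : -Real.log δ * (s : ℝ) ^ m ≤ Real.log n / 4 := by
      have hnl : 0 ≤ -Real.log δ := by linarith [Real.log_nonpos hδ.le hδ1]
      calc -Real.log δ * (s : ℝ) ^ m ≤ -Real.log δ * (Real.logb 2 n * √δ / (8 * (m + 1))) := by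
            gcongr
        _ = (-Real.log δ * √δ) * Real.logb 2 n / (8 * (m + 1)) := by ring
        _ ≤ 2 * (2 * Real.log n) / (8 * (1 + 1)) := by gcongr
        _ = Real.log n / 4 := by ring
    rw [← Real.log_le_log_iff (by positivity) (by positivity), Real.log_sqrt hn0.le,
      Real.log_mul (by positivity) (by positivity), Real.log_pow]
    push_cast
    linarith
  have hlhs : ((m : ℝ) + 1) * s ^ 2 ≤ √n := by
    have h1 : (s : ℝ) ≤ Real.logb 2 n / (8 * (m + 1)) := by
      have : (s : ℝ) ≤ (s : ℝ) ^ m := le_self_pow₀ (by exact_mod_cast hs) (by omega)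
      refine (this.trans h).trans ?_
      gcongr
      nlinarith
    have h2 : Real.log n ≤ 4 * √√n := by
      have := Real.log_le_self (x := √√n) (by positivity)
      rw [Real.log_sqrt (by positivity), Real.log_sqrt hn0.le] at this
      linarith
    have h3 : √√(n : ℝ) ^ 2 = √n := Real.sq_sqrt (by positivity)
    calc ((m : ℝ) + 1) * s ^ 2 ≤ (m + 1) * (Real.logb 2 n / (8 * (m + 1))) ^ 2 := by gcongr
      _ = Real.logb 2 n ^ 2 / (64 * (m + 1)) := by field_simp; ring
      _ ≤ (2 * (4 * √√n)) ^ 2 / (64 * (0 + 1)) := by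
          gcongr
          · linarith
          · linarith
      _ = √n := by rw [mul_pow, mul_pow, h3]; ring
  exact hlhs.trans hrhs

/-- A nonempty `(m + 1)`-graph on `[n]` of density `δ` contains a balanced complete
`(m + 1)`-partite subgraph with parts of size of order `(log₂ n) ^ (1 / m) * √δ`. -/
theorem exists_large_completeMultipartite {m n : ℕ} (hm : 1 ≤ m) (hn : 2 ≤ n)
    {H : Finset (Finset ℕ)} (hH : H ⊆ (Icc 1 n).powersetCard (m + 1)) (hne : H.Nonempty) :
    ∃ (s : ℕ) (P : Fin (m + 1) → Finset ℕ), 1 ≤ s ∧ (∀ i, #(P i) = s) ∧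
      (∀ i j, i ≠ j → Disjoint (P i) (P j)) ∧ completeMultipartiteEdges (m + 1) P ⊆ H ∧
      (s : ℝ) ≤ Real.logb 2 n ^ ((1 : ℝ) / m) ∧
      Real.logb 2 n ^ ((1 : ℝ) / m) / (16 * (m + 1)) * √(#H / (n : ℝ) ^ (m + 1)) ≤ s := by
  classical
  have hHr : ∀ T ∈ H, #T = m + 1 := fun T hT => (mem_powersetCard.1 (hH hT)).2
  -- Disjointness of the parts is automatic once all transversals are edges.
  suffices hsuff : ∃ (s : ℕ) (P : Fin (m + 1) → Finset ℕ), 1 ≤ s ∧ (∀ i, #(P i) = s) ∧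
      (∀ t : Fin (m + 1) → ℕ, (∀ i, t i ∈ P i) → univ.image t ∈ H) ∧
      (s : ℝ) ≤ Real.logb 2 n ^ ((1 : ℝ) / m) ∧
      Real.logb 2 n ^ ((1 : ℝ) / m) / (16 * (m + 1)) * √(#H / (n : ℝ) ^ (m + 1)) ≤ s by
    obtain ⟨s, P, hs, hP, hPH, h1, h2⟩ := hsuff
    have hd := parts_disjoint hHr (fun i => card_pos.1 (by rw [hP i]; omega)) hPH
    refine ⟨s, P, hs, hP, hd, ?_, h1, h2⟩
    rw [completeMultipartiteEdges_eq_image hd, image_subset_iff]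
    exact fun t ht => hPH t (Fintype.mem_piFinset.1 ht)
  set L := Real.logb 2 n with hLdef
  set X := L ^ ((1 : ℝ) / m) with hXdef
  set δ : ℝ := #H / (n : ℝ) ^ (m + 1) with hδdef
  have hn0 : (0 : ℝ) < n := by positivity
  have hL1 : 1 ≤ L := by
    rw [hLdef, Real.le_logb_iff_rpow_le (by norm_num) hn0]
    simpa using (by exact_mod_cast hn : (2 : ℝ) ≤ n)
  have hX1 : 1 ≤ X := Real.one_le_rpow hL1 (by positivity)
  have hXm : X ^ m = L := by
    rw [hXdef, one_div, Real.rpow_inv_natCast_pow (by linarith) (by omega)]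
  have hδ : 0 < δ := by
    have := hne.card_pos
    positivity
  have hcardV : Fintype.card (Icc 1 n) = n := by simp
  let E : (Fin (m + 1) → Icc 1 n) → Prop := fun x => univ.image (fun i => (x i : ℕ)) ∈ H
  have : Nonempty (Icc 1 n) := ⟨⟨1, by simp; omega⟩⟩
  have hδE : δ ≤ 𝔼 x, if E x then (1 : ℝ) else 0 := by
    rw [Fintype.expect_eq_sum_div_card, sum_boole, Fintype.card_fun, hcardV, Fintype.card_fin,
      Nat.cast_pow, hδdef]
    gcongr
    exact card_le_card_ordered_edges hH
  have hδ1 : δ ≤ 1 := by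
    refine hδE.trans (expect_le univ_nonempty fun x _ => ?_)
    split_ifs <;> norm_num
  have hsq1 : √δ ≤ 1 := Real.sqrt_le_one.2 hδ1
  set y : ℝ := X / (8 * (m + 1)) * √δ with hy
  have hy2 : X / (16 * (m + 1)) * √δ = y / 2 := by rw [hy]; field_simp; ring
  rw [hy2]
  have hy0 : 0 ≤ y := by positivity
  -- If `y < 1`, a single edge is enough; otherwise the parts get size `⌊y⌋₊`.
  rcases lt_or_ge y 1 with hy1 | hy1
  · obtain ⟨T, hT⟩ := hne
    let e := T.orderIsoOfFin (hHr T hT)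
    refine ⟨1, fun i => {(e i : ℕ)}, le_rfl, fun i => card_singleton _, fun t ht => ?_,
      by simpa using hX1, by push_cast; linarith⟩
    have hte : t = fun i => (e i : ℕ) := funext fun i => mem_singleton.1 (ht i)
    have : univ.image t = T := by
      subst hte
      ext v
      simp only [mem_image, mem_univ, true_and]
      constructor
      · rintro ⟨i, rfl⟩; exact (e i).2
      · intro hv; exact ⟨e.symm ⟨v, hv⟩, by simp⟩
    rwa [this]
  set s := ⌊y⌋₊ with hsdef
  have hs1 : 1 ≤ s := Nat.one_le_floor_iff _ |>.2 hy1
  have hsy : (s : ℝ) ≤ y := Nat.floor_le hy0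
  have hys : y / 2 ≤ s := by
    have h1 : y < s + 1 := Nat.lt_floor_add_one y
    have h2 : (1 : ℝ) ≤ s := by exact_mod_cast hs1
    linarith
  have hden : (1 : ℝ) ≤ 8 * (m + 1) := by
    have : (0 : ℝ) ≤ m := by positivity
    linarith
  have hsX : (s : ℝ) ≤ X := by
    calc (s : ℝ) ≤ X / (8 * (m + 1)) * √δ := hsy
      _ ≤ X / 1 * 1 := by gcongr
      _ = X := by ring
  have hsm : (s : ℝ) ^ m ≤ L * √δ / (8 * (m + 1)) := by
    calc (s : ℝ) ^ m ≤ (X / (8 * (m + 1)) * √δ) ^ m := by gcongr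
      _ = X ^ m * (√δ / (8 * (m + 1))) ^ m := by rw [← mul_pow]; congr 1; ring
      _ ≤ L * (√δ / (8 * (m + 1))) := by
          rw [hXm]
          gcongr
          refine pow_le_of_le_one (by positivity) ?_ (by omega)
          exact div_le_one_of_le₀ (hsq1.trans hden) (by positivity)
      _ = _ := by ring
  have hmain := numeric_bound hm hn hs1 hδ hδ1 hsm
  obtain ⟨x, hxinj, hxW⟩ := exists_injective_tuple s m hs1 E (by
    rw [hcardV]
    refine hmain.trans ?_
    gcongr)
  obtain ⟨W, hWsub, hWcard⟩ := exists_subset_card_eq hxW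
  refine ⟨s, Fin.cons (W.image Subtype.val) fun i => univ.image fun a => (x i a : ℕ), hs1, ?_, ?_,
    hsX, hys⟩
  · refine Fin.cases ?_ fun i => ?_
    · rw [Fin.cons_zero, card_image_of_injective _ Subtype.val_injective, hWcard]
    · have hinj : Function.Injective fun a => (x i a : ℕ) :=
        Subtype.val_injective.comp (hxinj i)
      rw [Fin.cons_succ, card_image_of_injective _ hinj, card_univ, Fintype.card_fin]
  · intro t ht
    obtain ⟨v, hvW, hv⟩ := mem_image.1 (by simpa only [Fin.cons_zero] using ht 0)
    have hφ : ∀ i : Fin m, ∃ a, (x i a : ℕ) = t i.succ := fun i => by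
      have := ht i.succ
      simpa only [Fin.cons_succ, mem_image, mem_univ, true_and] using this
    choose φ hφ using hφ
    have hE : E (Fin.cons v fun i => x i (φ i)) := (mem_filter.1 (hWsub hvW)).2 φ
    have ht' : t = fun i => ((Fin.cons v fun i => x i (φ i) : Fin (m + 1) → Icc 1 n) i : ℕ) := by
      ext i
      refine Fin.cases ?_ (fun i => ?_) i
      · simp [hv]
      · simp [hφ]
    rw [ht']
    exact hE

/-! ### Greedy decomposition -/

/-- Greedy decomposition: if every nonempty subfamily `H` of `U` contains a balanced complete
`(m + 1)`-partite graph with parts of size `s ≥ B * √|H|`, then each `H ⊆ U` decomposes into such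
graphs at total cost at most `(2 / B) * √|H|`. -/
theorem exists_decomposition_of_exists_large {m : ℕ} {X B : ℝ} (hB : 0 < B) {U : Finset (Finset ℕ)}
    (hfind : ∀ H ⊆ U, H.Nonempty → ∃ (s : ℕ) (P : Fin (m + 1) → Finset ℕ), 1 ≤ s ∧
      (∀ i, #(P i) = s) ∧ (∀ i j, i ≠ j → Disjoint (P i) (P j)) ∧
      completeMultipartiteEdges (m + 1) P ⊆ H ∧ (s : ℝ) ≤ X ∧ B * √(#H) ≤ s)
    (H : Finset (Finset ℕ)) (hH : H ⊆ U) :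
    ∃ (k : ℕ) (s : Fin k → ℕ) (K : Fin k → Finset (Finset ℕ)),
        (∀ i, ∃ P : Fin (m + 1) → Finset ℕ, (∀ j, #(P j) = s i) ∧
          (∀ j j', j ≠ j' → Disjoint (P j) (P j')) ∧
          K i = completeMultipartiteEdges (m + 1) P) ∧
        (∀ i j, i ≠ j → Disjoint (K i) (K j)) ∧
        H = Finset.univ.biUnion K ∧
        (∀ i, (s i : ℝ) ≤ X) ∧
        (∑ i, ((s i : ℝ)) ^ m) ≤ 2 / B * √(#H) := by
  induction H using Finset.strongInduction with
  | H H ih =>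
    rcases H.eq_empty_or_nonempty with rfl | hne
    · exact ⟨0, Fin.elim0, Fin.elim0, fun i => i.elim0, fun i => i.elim0, by simp,
        fun i => i.elim0, by simp⟩
    obtain ⟨s₀, P₀, hs₀, hP₀, hd₀, hsub, hX₀, hB₀⟩ := hfind H hH hne
    set K₀ := completeMultipartiteEdges (m + 1) P₀ with hK₀
    have hcard : #K₀ = s₀ ^ (m + 1) := card_completeMultipartiteEdges hd₀ hP₀
    have hK₀ne : K₀.Nonempty := card_pos.1 (by rw [hcard]; positivity)
    obtain ⟨k, s, K, h1, h2, h3, h4, h5⟩ :=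
      ih (H \ K₀) (sdiff_ssubset hsub hK₀ne) (sdiff_subset.trans hH)
    have hdK : ∀ i, Disjoint K₀ (K i) := fun i => by
      have hK : K i ⊆ H \ K₀ := h3 ▸ subset_biUnion_of_mem K (mem_univ i)
      exact disjoint_sdiff.mono_right hK
    refine ⟨k + 1, Fin.cons s₀ s, Fin.cons K₀ K, ?_, ?_, ?_, ?_, ?_⟩
    · exact Fin.cases ⟨P₀, hP₀, hd₀, rfl⟩ h1
    · refine Fin.cases (Fin.cases (fun h => (h rfl).elim) fun j _ => hdK j) fun i =>
        Fin.cases (fun _ => (hdK i).symm) fun j hij => h2 i j fun h => hij (by rw [h])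
    · ext T
      have hT : T ∈ H \ K₀ ↔ T ∈ univ.biUnion K := by rw [← h3]
      simp only [mem_sdiff, mem_biUnion, mem_univ, true_and] at hT
      simp only [mem_biUnion, mem_univ, true_and, Fin.exists_fin_succ, Fin.cons_zero,
        Fin.cons_succ, ← hT]
      have := @hsub T
      tauto
    · exact Fin.cases hX₀ h4
    · rw [Fin.sum_univ_succ]
      simp only [Fin.cons_zero, Fin.cons_succ]
      refine (add_le_add_right h5 _).trans ?_
      -- With `u ^ 2 - w ^ 2 = s₀ ^ (m + 1)`, the drop `(2 / B) * (u - w)` of the potential pays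
      -- for `s₀ ^ m`, because `u + w ≤ 2 * u ≤ 2 * s₀ / B`.
      have hcH : (#(H \ K₀) : ℝ) = #H - (s₀ : ℝ) ^ (m + 1) := by
        rw [card_sdiff_of_subset hsub, Nat.cast_sub (card_le_card hsub), hcard, Nat.cast_pow]
      set u := √(#H : ℝ) with hu
      set w := √(#(H \ K₀) : ℝ) with hw
      have hu2 : u ^ 2 = #H := Real.sq_sqrt (by positivity)
      have hw2 : w ^ 2 = #H - (s₀ : ℝ) ^ (m + 1) := by rw [← hcH]; exact Real.sq_sqrt (by positivity)
      have hw0 : 0 ≤ w := Real.sqrt_nonneg _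
      have hwu : w ≤ u := Real.sqrt_le_sqrt (by exact_mod_cast card_le_card sdiff_subset)
      have hs₀' : (0 : ℝ) < s₀ := by exact_mod_cast hs₀
      have hp : (0 : ℝ) < (s₀ : ℝ) ^ m := by positivity
      have hkey : (s₀ : ℝ) ^ m * s₀ ≤ 2 / B * (u - w) * s₀ := by
        calc (s₀ : ℝ) ^ m * s₀ = (u - w) * (u + w) := by rw [← pow_succ]; linarith
          _ ≤ (u - w) * (2 * u) := by
              gcongr
              linarith
          _ = 2 / B * (u - w) * (B * u) := by field_simp
          _ ≤ 2 / B * (u - w) * s₀ := by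
              have : 0 ≤ u - w := by linarith
              gcongr
      have := le_of_mul_le_mul_right hkey hs₀'
      linarith

end

/-- For every `r ≥ 2` there is `c > 0` such that for every `n ≥ r`, every `r`-uniform
hypergraph `H` on `[n]` decomposes into edge-disjoint balanced complete `r`-partite
`r`-graphs `K_{s i : r}` with `s i ≤ (log₂ n)^(1/(r-1))` and
`∑ i, (s i)^(r-1) ≤ c·n^r/(log₂ n)^(1/(r-1))`. -/
theorem hypergraph_decomposition (r : ℕ) (hr : 2 ≤ r) :
    ∃ c : ℝ, 0 < c ∧ ∀ n : ℕ, r ≤ n →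
      ∀ H : Finset (Finset ℕ), H ⊆ (Finset.Icc 1 n).powersetCard r →
      ∃ (m : ℕ) (s : Fin m → ℕ) (K : Fin m → Finset (Finset ℕ)),
        (∀ i, ∃ P : Fin r → Finset ℕ, (∀ j, (P j).card = s i) ∧
          (∀ j j', j ≠ j' → Disjoint (P j) (P j')) ∧
          K i = completeMultipartiteEdges r P) ∧
        (∀ i j, i ≠ j → Disjoint (K i) (K j)) ∧
        H = Finset.univ.biUnion K ∧
        (∀ i, (s i : ℝ) ≤ (Real.logb 2 n) ^ ((1 : ℝ) / ((r : ℝ) - 1))) ∧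
        (∑ i, ((s i : ℝ)) ^ (r - 1)) ≤
          c * (n : ℝ) ^ r / (Real.logb 2 n) ^ ((1 : ℝ) / ((r : ℝ) - 1)) := by
  obtain ⟨m, rfl⟩ : ∃ m, r = m + 1 := ⟨r - 1, by omega⟩
  refine ⟨32 * (m + 1), by positivity, fun n hn H hH => ?_⟩
  have hcast : ((m + 1 : ℕ) : ℝ) - 1 = m := by push_cast; ring
  simp only [hcast, Nat.add_sub_cancel]
  set X := Real.logb 2 n ^ ((1 : ℝ) / m) with hX
  have hn0 : (0 : ℝ) < n := by exact_mod_cast (by omega : 0 < n)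
  have hX0 : 0 < X :=
    Real.rpow_pos_of_pos (Real.logb_pos (by norm_num) (by exact_mod_cast (by omega : 1 < n))) _
  have hN : 0 < √((n : ℝ) ^ (m + 1)) := by positivity
  obtain ⟨k, s, K, h1, h2, h3, h4, h5⟩ := exists_decomposition_of_exists_large (m := m) (X := X)
    (B := X / (16 * (m + 1)) / √((n : ℝ) ^ (m + 1))) (by positivity)
    (U := (Finset.Icc 1 n).powersetCard (m + 1)) (fun H' hH' hne => by
      obtain ⟨s, P, g1, g2, g3, g4, g5, g6⟩ :=
        exists_large_completeMultipartite (by omega) (by omega) hH' hne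
      refine ⟨s, P, g1, g2, g3, g4, g5, le_trans (le_of_eq ?_) g6⟩
      rw [Real.sqrt_div (by positivity)]
      ring) H hH
  refine ⟨k, s, K, h1, h2, h3, h4, h5.trans ?_⟩
  have hHn : √(H.card : ℝ) ≤ √((n : ℝ) ^ (m + 1)) := by
    apply Real.sqrt_le_sqrt
    have h := Finset.card_le_card hH
    rw [Finset.card_powersetCard, Nat.card_Icc, Nat.add_sub_cancel] at h
    exact_mod_cast h.trans (Nat.choose_le_pow n (m + 1))
  have hsq : √((n : ℝ) ^ (m + 1)) * √((n : ℝ) ^ (m + 1)) = (n : ℝ) ^ (m + 1) :=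
    Real.mul_self_sqrt (by positivity)
  calc 2 / (X / (16 * (m + 1)) / √((n : ℝ) ^ (m + 1))) * √(H.card : ℝ)
      ≤ 2 / (X / (16 * (m + 1)) / √((n : ℝ) ^ (m + 1))) * √((n : ℝ) ^ (m + 1)) := by gcongr
    _ = 32 * (m + 1) * (√((n : ℝ) ^ (m + 1)) * √((n : ℝ) ^ (m + 1))) / X := by
        field_simp; ring
    _ = _ := by rw [hsq]
end
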